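/- arXiv:1903.04335 — 3 statements merged into one kernel-verified Lean document; each statement's English description precedes it below -/
import Mathlib

section
/- Let −1 ≤ a < b ≤ 1 and let C(x) = Σ_{m=0}^M c_m T_m(x) be a real polynomial of degree at most M written in the basis of Chebyshev polynomials of the first kind T_m. Set α = (1/2)·exp(i·(arccos(a) + arccos(b))/2) and β = cos((arccos(a) − arccos(b))/2). Then C(x) ≥ 0 for all x ∈ [a,b] if and only if there exist Hermitian positive semidefinite matrices Q ∈ ℂ^{(M+1)×(M+1)} (rows/columns indexed by 0,…,M) and R ∈ ℂ^{M×M} (indexed by 0,…,M−1) such that, for every m = 0,…,M, Σ_{i−j=m} Q_{i,j} + α·Σ_{i−j=m−1} R_{i,j} − β·Σ_{i−j=m} R_{i,j} + conj(α)·Σ_{i−j=m+1} R_{i,j} equals c_m/2 when m ≥ 1 and equals c_0 when m = 0 (all sums run over admissible index pairs (i,j) with the indicated difference i − j). -/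
open scoped ComplexOrder
/-- Feasibility of the semidefinite certificate for nonnegativity of a polynomial
`∑ m, r m • T m` on `[a,b]`, with data `α ∈ ℂ`, `β ∈ ℝ`:
there exist PSD matrices `Q ∈ ℂ^{(M+1)×(M+1)}` and `R ∈ ℂ^{M×M}` such that for all
`m = 0,…,M`,
`∑_{i-j=m} Q_{ij} + α ∑_{i-j=m-1} R_{ij} - β ∑_{i-j=m} R_{ij} + conj(α) ∑_{i-j=m+1} R_{ij}`
equals `r 0` if `m = 0` and `r m / 2` if `m ≥ 1`. -/
def SdpCert (M : ℕ) (α : ℂ) (β : ℝ) (r : Fin (M + 1) → ℝ) : Prop :=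
  ∃ (Q : Matrix (Fin (M + 1)) (Fin (M + 1)) ℂ) (R : Matrix (Fin M) (Fin M) ℂ),
    Q.PosSemidef ∧ R.PosSemidef ∧
    ∀ m : Fin (M + 1),
      (∑ p ∈ Finset.univ.filter
          (fun p : Fin (M + 1) × Fin (M + 1) => ((p.1 : ℕ) : ℤ) - ((p.2 : ℕ) : ℤ) = (m : ℕ)),
          Q p.1 p.2)
        + α * (∑ p ∈ Finset.univ.filter
            (fun p : Fin M × Fin M => ((p.1 : ℕ) : ℤ) - ((p.2 : ℕ) : ℤ) = ((m : ℕ) : ℤ) - 1),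
            R p.1 p.2)
        - (β : ℂ) * (∑ p ∈ Finset.univ.filter
            (fun p : Fin M × Fin M => ((p.1 : ℕ) : ℤ) - ((p.2 : ℕ) : ℤ) = (m : ℕ)),
            R p.1 p.2)
        + (starRingEnd ℂ) α * (∑ p ∈ Finset.univ.filter
            (fun p : Fin M × Fin M => ((p.1 : ℕ) : ℤ) - ((p.2 : ℕ) : ℤ) = ((m : ℕ) : ℤ) + 1),
            R p.1 p.2)
      = if m = 0 then ((r m : ℝ) : ℂ) else ((r m : ℝ) : ℂ) / 2


open Polynomial

lemma nonneg_right (q : ℝ[X]) (r b : ℝ) (h : r < b) (hq : ∀ x, r < x → x < b → 0 ≤ q.eval x) :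
    0 ≤ q.eval r := by
  have h1 : Filter.Tendsto (fun x => q.eval x) (nhdsWithin r (Set.Ioi r)) (nhds (q.eval r)) :=
    (q.continuous.tendsto r).mono_left nhdsWithin_le_nhds
  refine ge_of_tendsto h1 ?_
  filter_upwards [Ioo_mem_nhdsGT h] with x hx
  exact hq x hx.1 hx.2

lemma nonneg_left (q : ℝ[X]) (r a : ℝ) (h : a < r) (hq : ∀ x, a < x → x < r → 0 ≤ q.eval x) :
    0 ≤ q.eval r := by
  have h1 : Filter.Tendsto (fun x => q.eval x) (nhdsWithin r (Set.Iio r)) (nhds (q.eval r)) :=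
    (q.continuous.tendsto r).mono_left nhdsWithin_le_nhds
  refine ge_of_tendsto h1 ?_
  filter_upwards [Ioo_mem_nhdsLT h] with x hx
  exact hq x hx.1 hx.2

lemma nonneg_induct (P : ℕ → ℝ[X] → Prop) (a b : ℝ)
    (hmul : ∀ m n p q, P m p → P n q → P (m + n) (p * q))
    (hconst : ∀ c : ℝ, 0 ≤ c → P 0 (C c))
    (hb : ∀ r, b ≤ r → P 1 (C r - X))
    (ha : ∀ r, r ≤ a → P 1 (X - C r))
    (hq : ∀ u v : ℝ, P 2 ((X - C u) ^ 2 + C (v ^ 2))) (hab : a < b) :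
    ∀ (d : ℕ) (p : ℝ[X]), p.natDegree = d → (∀ x, a < x → x < b → 0 ≤ p.eval x) → P d p := by
  intro d
  induction d using Nat.strong_induction_on with
  | _ d ih =>
  intro p hd hp
  rcases Nat.eq_zero_or_pos d with h0 | hpos
  · subst h0
    rw [natDegree_eq_zero] at hd
    obtain ⟨c, rfl⟩ := hd
    have := hp ((a + b) / 2) (by linarith) (by linarith)
    exact hconst c (by simpa using this)
  have hp0 : p ≠ 0 := by rintro rfl; simp at hd; omega
  have hdeg : p.degree ≠ 0 := by
    intro h
    have := natDegree_eq_zero_iff_degree_le_zero.mpr h.le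
    omega
  obtain ⟨z, hz⟩ := IsAlgClosed.exists_aeval_eq_zero ℂ p hdeg
  by_cases him : z.im = 0
  · have hroot : p.eval z.re = 0 := by
      have hz' : z = ((z.re : ℝ) : ℂ) := by apply Complex.ext <;> simp [him]
      rw [hz'] at hz
      have : ((p.eval z.re : ℝ) : ℂ) = 0 := by
        rw [← hz]
        exact (aeval_algebraMap_apply_eq_algebraMap_eval (A := ℂ) z.re p).symm
      exact_mod_cast this
    set r := z.re
    obtain ⟨q, rfl⟩ := dvd_iff_isRoot.mpr hroot
    have hq0 : q ≠ 0 := right_ne_zero_of_mul hp0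
    have hdq : 1 + q.natDegree = d := by
      rw [← hd, natDegree_mul (X_sub_C_ne_zero r) hq0, natDegree_X_sub_C]
    rcases le_or_gt r a with hra | hra
    · rw [← hdq]
      refine hmul _ _ _ _ (ha r hra) (ih _ (by omega) q rfl ?_)
      intro x h1 h2
      have := hp x h1 h2
      rw [eval_mul] at this
      exact nonneg_of_mul_nonneg_right this (by simp; linarith)
    rcases le_or_gt b r with hrb | hrb
    · rw [← hdq, show (X - C r) * q = (C r - X) * (-q) by ring]
      refine hmul _ _ _ _ (hb r hrb) (ih _ (by omega) (-q) (by simp) ?_)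
      intro x h1 h2
      have := hp x h1 h2
      rw [show (X - C r) * q = (C r - X) * (-q) by ring, eval_mul] at this
      exact nonneg_of_mul_nonneg_right this (by simp; linarith)
    · have h1 : 0 ≤ q.eval r := by
        refine nonneg_right q r b hrb fun x h1 h2 => ?_
        have := hp x (by linarith) h2
        rw [eval_mul] at this
        exact nonneg_of_mul_nonneg_right this (by simp; linarith)
      have h2 : 0 ≤ (-q).eval r := by
        refine nonneg_left (-q) r a hra fun x h1 h2 => ?_
        have := hp x h1 (by linarith)
        rw [show (X - C r) * q = (C r - X) * (-q) by ring, eval_mul] at this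
        exact nonneg_of_mul_nonneg_right this (by simp; linarith)
      have h3 : q.eval r = 0 := by simp at h2; linarith
      obtain ⟨s, rfl⟩ := dvd_iff_isRoot.mpr h3
      have hs0 : s ≠ 0 := right_ne_zero_of_mul hq0
      have hds : 2 + s.natDegree = d := by
        rw [← hdq, natDegree_mul (X_sub_C_ne_zero r) hs0, natDegree_X_sub_C]; ring
      have hne : ∀ x, a < x → x < b → x ≠ r → 0 ≤ s.eval x := by
        intro x h1 h2 h3
        have := hp x h1 h2
        rw [← mul_assoc, eval_mul] at this
        refine nonneg_of_mul_nonneg_right this ?_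
        simp only [eval_mul, eval_sub, eval_X, eval_C]
        exact mul_self_pos.mpr (sub_ne_zero.mpr h3)
      rw [← hds, show (X - C r) * ((X - C r) * s) = ((X - C r) ^ 2 + C (0 ^ 2)) * s by simp; ring]
      refine hmul _ _ _ _ (hq r 0) (ih _ (by omega) s rfl ?_)
      intro x h1 h2
      by_cases hx : x = r
      · rw [hx]
        exact nonneg_right s r b hrb fun y h3 h4 => hne y (by linarith) h4 h3.ne'
      · exact hne x h1 h2 hx
  · obtain ⟨q, hpq⟩ := quadratic_dvd_of_aeval_eq_zero_im_ne_zero p hz him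
    have hform : (X ^ 2 - C (2 * z.re) * X + C (‖z‖ ^ 2) : ℝ[X])
        = (X - C z.re) ^ 2 + C (z.im ^ 2) := by
      rw [← Complex.normSq_eq_norm_sq, Complex.normSq_apply]
      simp only [map_mul, map_add, map_pow, map_ofNat]
      ring
    rw [hform] at hpq
    subst hpq
    have hq0 : q ≠ 0 := right_ne_zero_of_mul hp0
    have hd2 : ((X - C z.re) ^ 2 + C (z.im ^ 2) : ℝ[X]).natDegree = 2 := by
      rw [natDegree_add_C, natDegree_pow, natDegree_X_sub_C]
    have hdq : 2 + q.natDegree = d := by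
      rw [← hd, natDegree_mul (left_ne_zero_of_mul hp0) hq0, hd2]
    rw [← hdq]
    refine hmul _ _ _ _ (hq _ _) (ih _ (by omega) q rfl ?_)
    intro x h1 h2
    have := hp x h1 h2
    rw [eval_mul] at this
    refine nonneg_of_mul_nonneg_right this ?_
    simp only [eval_add, eval_pow, eval_sub, eval_X, eval_C]
    positivity

lemma circle_conj (z : Circle) : (starRingEnd ℂ) (z : ℂ) = (z : ℂ)⁻¹ := by
  rw [← Circle.coe_inv, Circle.coe_inv_eq_conj]

lemma circle_normSq (z : Circle) : (z : ℂ).re ^ 2 + (z : ℂ).im ^ 2 = 1 := by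
  have := Circle.normSq_coe z
  rw [Complex.normSq_apply] at this
  nlinarith

/-- The Laurent form attached to a square matrix. -/
noncomputable def qform {n : ℕ} (Q : Matrix (Fin n) (Fin n) ℂ) (z : Circle) : ℂ :=
  ∑ p : Fin n × Fin n, Q p.1 p.2 * (z : ℂ) ^ (((p.1 : ℕ) : ℤ) - ((p.2 : ℕ) : ℤ))

/-- The weight, nonnegative exactly on the arc. -/
noncomputable def wt (α : ℂ) (β : ℝ) (z : Circle) : ℝ := 2 * (α * (z : ℂ)).re - β

lemma wt_eq (α : ℂ) (β : ℝ) (z : Circle) :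
    ((wt α β z : ℝ) : ℂ) = α * z + (starRingEnd ℂ) α * (z : ℂ)⁻¹ - β := by
  rw [← circle_conj, ← map_mul, Complex.add_conj, wt]
  push_cast; ring

lemma qform_add {n : ℕ} (Q R : Matrix (Fin n) (Fin n) ℂ) (z : Circle) :
    qform (Q + R) z = qform Q z + qform R z := by
  simp [qform, add_mul, Finset.sum_add_distrib]

lemma qform_zero {n : ℕ} (z : Circle) : qform (0 : Matrix (Fin n) (Fin n) ℂ) z = 0 := by
  simp [qform]

lemma qform_nonneg {n : ℕ} (Q : Matrix (Fin n) (Fin n) ℂ) (hQ : Q.PosSemidef) (z : Circle) :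
    0 ≤ qform Q z := by
  have h := hQ.dotProduct_mulVec_nonneg (fun i => (z : ℂ)⁻¹ ^ (i : ℕ))
  convert h using 1
  simp only [qform, dotProduct, Matrix.mulVec, Finset.mul_sum, Fintype.sum_prod_type]
  refine Finset.sum_congr rfl fun i _ => Finset.sum_congr rfl fun j _ => ?_
  have hz : (z : ℂ) ≠ 0 := Circle.coe_ne_zero z
  rw [zpow_sub₀ hz, zpow_natCast, zpow_natCast, Pi.star_apply, star_pow, ← circle_conj]
  simp only [RCLike.star_def, Complex.conj_conj]
  rw [circle_conj, inv_pow]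
  ring

lemma qform_rank_one (n : ℕ) (f : ℂ[X]) (hf : f.natDegree < n) :
    ∃ Q : Matrix (Fin n) (Fin n) ℂ, Q.PosSemidef ∧
      ∀ z : Circle, qform Q z = ((Complex.normSq (f.eval (z : ℂ)) : ℝ) : ℂ) := by
  refine ⟨Matrix.vecMulVec (fun i => f.coeff i) (star fun i => f.coeff i),
    Matrix.posSemidef_vecMulVec_self_star _, fun z => ?_⟩
  have hz : (z : ℂ) ≠ 0 := Circle.coe_ne_zero z
  have he : f.eval (z : ℂ) = ∑ i : Fin n, f.coeff i * (z : ℂ) ^ (i : ℕ) := by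
    rw [eval_eq_sum_range' hf, Finset.sum_range]
  rw [← Complex.mul_conj, he, map_sum, Finset.sum_mul_sum]
  simp only [qform, Fintype.sum_prod_type]
  refine Finset.sum_congr rfl fun i _ => Finset.sum_congr rfl fun j _ => ?_
  rw [zpow_sub₀ hz, zpow_natCast, zpow_natCast, map_mul, map_pow, circle_conj,
    Matrix.vecMulVec_apply, inv_pow, Pi.star_apply]
  simp only [RCLike.star_def]
  ring

/-- Generators of the cone. -/
def gen (α : ℂ) (β : ℝ) (n : ℕ) : Set (Circle → ℝ) :=
  {g | (∃ f : ℂ[X], f.natDegree ≤ n ∧ g = fun z : Circle => Complex.normSq (f.eval (z : ℂ))) ∨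
    (∃ f : ℂ[X], f.natDegree + 1 ≤ n ∧
      g = fun z : Circle => wt α β z * Complex.normSq (f.eval (z : ℂ)))}

/-- The cone. -/
def cone (α : ℂ) (β : ℝ) (n : ℕ) : AddSubmonoid (Circle → ℝ) := AddSubmonoid.closure (gen α β n)

lemma cone_mono (α : ℂ) (β : ℝ) {m n : ℕ} (h : m ≤ n) : cone α β m ≤ cone α β n := by
  refine AddSubmonoid.closure_mono ?_
  rintro g (⟨f, hf, rfl⟩ | ⟨f, hf, rfl⟩)
  · exact Or.inl ⟨f, by omega, rfl⟩
  · exact Or.inr ⟨f, by omega, rfl⟩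

lemma cone_psd (α : ℂ) (β : ℝ) (M : ℕ) (g : Circle → ℝ) (hg : g ∈ cone α β M) :
    ∃ (Q : Matrix (Fin (M + 1)) (Fin (M + 1)) ℂ) (R : Matrix (Fin M) (Fin M) ℂ),
      Q.PosSemidef ∧ R.PosSemidef ∧
      ∀ z : Circle, ((g z : ℝ) : ℂ) = qform Q z + wt α β z * qform R z := by
  induction hg using AddSubmonoid.closure_induction with
  | mem g hg =>
    rcases hg with ⟨f, hf, rfl⟩ | ⟨f, hf, rfl⟩
    · obtain ⟨Q, hQ, h⟩ := qform_rank_one (M + 1) f (by omega)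
      exact ⟨Q, 0, hQ, .zero, fun z => by rw [h, qform_zero]; simp⟩
    · obtain ⟨R, hR, h⟩ := qform_rank_one M f (by omega)
      exact ⟨0, R, .zero, hR, fun z => by rw [h, qform_zero]; push_cast; ring⟩
  | zero => exact ⟨0, 0, .zero, .zero, fun z => by simp [qform_zero]⟩
  | add g h _ _ ih1 ih2 =>
    obtain ⟨Q, R, hQ, hR, h1⟩ := ih1
    obtain ⟨Q', R', hQ', hR', h2⟩ := ih2
    refine ⟨Q + Q', R + R', hQ.add hQ', hR.add hR', fun z => ?_⟩
    rw [qform_add, qform_add, Pi.add_apply, Complex.ofReal_add, h1, h2]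
    ring

lemma cone_mul (α : ℂ) (β : ℝ) (m n : ℕ) (g h : Circle → ℝ) (hg : g ∈ cone α β m)
    (hh : h ∈ cone α β n) : g * h ∈ cone α β (m + n) := by
  have key := AddSubmonoid.mul_mem_mul hg hh
  rw [cone, cone, AddSubmonoid.closure_mul_closure] at key
  refine AddSubmonoid.closure_mono ?_ key
  rintro _ ⟨g, hg, h, hh, rfl⟩
  rcases hg with ⟨f, hf, rfl⟩ | ⟨f, hf, rfl⟩ <;> rcases hh with ⟨f', hf', rfl⟩ | ⟨f', hf', rfl⟩
  · refine Or.inl ⟨f * f', natDegree_mul_le.trans (by omega), ?_⟩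
    funext z; simp
  · refine Or.inr ⟨f * f', ?_, ?_⟩
    · have := natDegree_mul_le (p := f) (q := f'); omega
    · funext z; simp; ring
  · refine Or.inr ⟨f * f', ?_, ?_⟩
    · have := natDegree_mul_le (p := f) (q := f'); omega
    · funext z; simp; ring
  · refine Or.inl ⟨(C α * X ^ 2 - C (β : ℂ) * X + C ((starRingEnd ℂ) α)) * (f * f'), ?_, ?_⟩
    · have h1 := natDegree_mul_le (p := f) (q := f')
      have h2 := natDegree_mul_le (p := C α * X ^ 2 - C (β : ℂ) * X + C ((starRingEnd ℂ) α))
        (q := f * f')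
      have h3 : (C α * X ^ 2 - C (β : ℂ) * X + C ((starRingEnd ℂ) α)).natDegree ≤ 2 := by
        compute_degree
      omega
    · funext z
      have hz : (z : ℂ) ≠ 0 := Circle.coe_ne_zero z
      have : α * (z : ℂ) ^ 2 - β * z + (starRingEnd ℂ) α = z * ((wt α β z : ℝ) : ℂ) := by
        rw [wt_eq]; field_simp; ring
      simp [this, Complex.normSq_ofReal]
      ring

lemma cone_C (α : ℂ) (β : ℝ) (c : ℝ) (hc : 0 ≤ c) : (fun _ : Circle => c) ∈ cone α β 0 := by
  refine AddSubmonoid.subset_closure (Or.inl ⟨C ((√c : ℝ) : ℂ), by simp, ?_⟩)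
  funext z
  simp [Complex.normSq_ofReal, Real.mul_self_sqrt hc]

lemma cone_quad (α : ℂ) (β : ℝ) (u v : ℝ) :
    (fun z : Circle => ((z : ℂ).re - u) ^ 2 + v ^ 2) ∈ cone α β 2 := by
  have h1 : (fun z : Circle => ((z : ℂ).re - u) ^ 2) ∈ cone α β 2 := by
    refine AddSubmonoid.subset_closure
      (Or.inl ⟨C (1 / 2 : ℂ) * X ^ 2 - C (u : ℂ) * X + C (1 / 2 : ℂ), by compute_degree, ?_⟩)
    funext z
    have hz : (z : ℂ) ≠ 0 := Circle.coe_ne_zero z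
    have : (1 / 2 : ℂ) * (z : ℂ) ^ 2 - u * z + 1 / 2 = z * (((z : ℂ).re - u : ℝ) : ℂ) := by
      have h := Complex.add_conj (z : ℂ)
      rw [circle_conj] at h
      have h2 : (((z : ℂ).re : ℝ) : ℂ) = (z + (z : ℂ)⁻¹) / 2 := by rw [h]; push_cast; ring
      rw [Complex.ofReal_sub, h2]
      field_simp
      ring
    simp only [eval_add, eval_sub, eval_mul, eval_C, eval_pow, eval_X, this]
    rw [Complex.normSq_mul, Complex.normSq_ofReal, Circle.normSq_coe]
    ring
  exact add_mem h1 (cone_mono α β (by norm_num) (cone_C α β (v ^ 2) (sq_nonneg v)))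

lemma cone_one_sub (α : ℂ) (β t : ℝ) (s κ lam : ℝ) (hk : 0 ≤ κ) (hl : 0 ≤ lam) (hs : 0 ≤ s) :
    (fun z : Circle => lam * wt α β z
      + κ * (1 - ((z : ℂ).re * Real.cos t - (z : ℂ).im * Real.sin t)) + s) ∈ cone α β 1 := by
  have h1 : (fun z : Circle => wt α β z) ∈ cone α β 1 :=
    AddSubmonoid.subset_closure (Or.inr ⟨1, by simp, by simp⟩)
  have h2 : (fun z : Circle => 2 * (1 - ((z : ℂ).re * Real.cos t - (z : ℂ).im * Real.sin t)))
      ∈ cone α β 1 := by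
    refine AddSubmonoid.subset_closure
      (Or.inl ⟨C ⟨Real.cos t, Real.sin t⟩ * X - 1, by compute_degree, ?_⟩)
    funext z
    have h := circle_normSq z
    have h' := Real.sin_sq_add_cos_sq t
    simp only [eval_sub, eval_mul, eval_C, eval_X, eval_one, Complex.normSq_apply,
      Complex.sub_re, Complex.sub_im, Complex.mul_re, Complex.mul_im, Complex.one_re,
      Complex.one_im]
    linear_combination (-1 : ℝ) * h - ((z : ℂ).re ^ 2 + (z : ℂ).im ^ 2) * h'
  have h3 := cone_mul α β 0 1 _ _ (cone_C α β lam hl) h1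
  have h4 := cone_mul α β 0 1 _ _ (cone_C α β (κ / 2) (by linarith)) h2
  have h5 := cone_mono α β zero_le_one (cone_C α β s hs)
  have h6 := add_mem (add_mem h3 h4) h5
  convert h6 using 1
  funext z
  simp only [Pi.add_apply, Pi.mul_apply]
  ring

/-- Evaluation of a Laurent polynomial on the circle. -/
noncomputable def ev : (ℤ →₀ ℂ) →ₗ[ℂ] (Circle → ℂ) :=
  Finsupp.linearCombination ℂ (fun (k : ℤ) (z : Circle) => (z : ℂ) ^ k)

lemma ev_single (k : ℤ) (x : ℂ) (z : Circle) : ev (Finsupp.single k x) z = x * (z : ℂ) ^ k := by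
  simp [ev]

lemma ev_injective : Function.Injective ev := by
  let φ : ℤ → (Circle →* ℂ) := fun k => Circle.coeHom.comp (zpowGroupHom k)
  have hφ : Function.Injective φ := by
    intro k l h
    have h1 : (Circle.exp 1) ^ k = (Circle.exp 1) ^ l := by
      have := DFunLike.congr_fun h (Circle.exp 1)
      exact Circle.coe_injective this
    have h2 := congrArg (fun z : Circle => (z : ℂ)) h1
    simp only [Circle.coe_zpow, Circle.coe_exp, ← Complex.exp_int_mul] at h2
    rw [Complex.exp_eq_exp_iff_exists_int] at h2
    obtain ⟨n, hn⟩ := h2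
    have h3 : (k : ℝ) = l + n * (2 * Real.pi) := by
      have : ((k : ℂ)) = l + n * (2 * Real.pi) := by
        have hI := Complex.I_ne_zero
        apply mul_right_cancel₀ hI
        push_cast at hn
        linear_combination hn
      exact_mod_cast this
    by_contra hkl
    have hn0 : n ≠ 0 := by
      rintro rfl
      apply hkl
      have : (k : ℝ) = l := by simpa using h3
      exact_mod_cast this
    refine irrational_pi ⟨((k - l : ℤ) : ℚ) / (2 * n), ?_⟩
    have : (n : ℝ) ≠ 0 := by exact_mod_cast hn0
    push_cast
    field_simp
    linarith
  have h := (linearIndependent_monoidHom Circle ℂ).comp φ hφ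
  have : ((fun f : Circle →* ℂ => (f : Circle → ℂ)) ∘ φ)
      = fun (k : ℤ) (z : Circle) => (z : ℂ) ^ k := by
    funext k z
    exact Circle.coe_zpow z k
  rw [this] at h
  exact h

/-- The Laurent polynomial of a matrix, shifted by `s`. -/
noncomputable def laur {n : ℕ} (Q : Matrix (Fin n) (Fin n) ℂ) (s : ℤ) : ℤ →₀ ℂ :=
  ∑ p : Fin n × Fin n, Finsupp.single (((p.1 : ℕ) : ℤ) - ((p.2 : ℕ) : ℤ) + s) (Q p.1 p.2)

lemma laur_apply {n : ℕ} (Q : Matrix (Fin n) (Fin n) ℂ) (s m t : ℤ) (ht : t = m - s) :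
    laur Q s m = ∑ p ∈ Finset.univ.filter
          (fun p : Fin n × Fin n => ((p.1 : ℕ) : ℤ) - ((p.2 : ℕ) : ℤ) = t), Q p.1 p.2 := by
  rw [laur, Finsupp.finsetSum_apply, Finset.sum_filter]
  refine Finset.sum_congr rfl fun p _ => ?_
  rw [Finsupp.single_apply]
  congr 1
  subst ht
  exact propext ⟨fun h => by omega, fun h => by omega⟩

lemma laur_neg {n : ℕ} (Q : Matrix (Fin n) (Fin n) ℂ) (hQ : Q.PosSemidef) (s m : ℤ) :
    laur Q (-s) (-m) = (starRingEnd ℂ) (laur Q s m) := by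
  rw [laur, laur, Finsupp.finsetSum_apply, Finsupp.finsetSum_apply, map_sum,
    ← (Equiv.prodComm (Fin n) (Fin n)).sum_comp]
  refine Finset.sum_congr rfl fun p _ => ?_
  rw [Finsupp.single_apply, Finsupp.single_apply]
  have h := hQ.isHermitian.apply p.2 p.1
  simp only [Equiv.prodComm_apply, Prod.fst_swap, Prod.snd_swap]
  rw [← h, apply_ite (starRingEnd ℂ), map_zero]
  congr 1
  exact propext ⟨fun h => by omega, fun h => by omega⟩

lemma laur_zero {n : ℕ} (Q : Matrix (Fin n) (Fin n) ℂ) (s m : ℤ) (h : (n : ℤ) ≤ m - s) :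
    laur Q s m = 0 := by
  rw [laur, Finsupp.finsetSum_apply]
  refine Finset.sum_eq_zero fun p _ => ?_
  rw [Finsupp.single_apply, if_neg]
  have := p.1.2
  omega

lemma ev_laur {n : ℕ} (Q : Matrix (Fin n) (Fin n) ℂ) (s : ℤ) (z : Circle) :
    ev (laur Q s) z = (z : ℂ) ^ s * qform Q z := by
  rw [laur, map_sum, Finset.sum_apply, qform, Finset.mul_sum]
  refine Finset.sum_congr rfl fun p _ => ?_
  rw [ev_single, zpow_add₀ (Circle.coe_ne_zero z)]
  ring

/-- Left side of the certificate. -/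
noncomputable def lhsP {M : ℕ} (α : ℂ) (β : ℝ) (Q : Matrix (Fin (M + 1)) (Fin (M + 1)) ℂ)
    (R : Matrix (Fin M) (Fin M) ℂ) : ℤ →₀ ℂ :=
  laur Q 0 + α • laur R 1 - (β : ℂ) • laur R 0 + (starRingEnd ℂ) α • laur R (-1)

/-- Right side of the certificate. -/
noncomputable def rhsP {M : ℕ} (c : Fin (M + 1) → ℝ) : ℤ →₀ ℂ :=
  ∑ m : Fin (M + 1), (Finsupp.single ((m : ℕ) : ℤ) ((c m : ℂ) / 2)
    + Finsupp.single (-((m : ℕ) : ℤ)) ((c m : ℂ) / 2))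

lemma ev_lhsP {M : ℕ} (α : ℂ) (β : ℝ) (Q : Matrix (Fin (M + 1)) (Fin (M + 1)) ℂ)
    (R : Matrix (Fin M) (Fin M) ℂ) (z : Circle) :
    ev (lhsP α β Q R) z = qform Q z + wt α β z * qform R z := by
  simp only [lhsP, map_add, map_sub, map_smul, Pi.add_apply, Pi.sub_apply, Pi.smul_apply, ev_laur,
    smul_eq_mul, wt_eq, zpow_zero, zpow_one, zpow_neg]
  ring

lemma ev_rhsP {M : ℕ} (c : Fin (M + 1) → ℝ) (z : Circle) :
    ev (rhsP c) z = (((∑ m : Fin (M + 1),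
      Polynomial.C (c m) * Polynomial.Chebyshev.T ℝ ((m : ℕ) : ℤ)).eval (z : ℂ).re : ℝ) : ℂ) := by
  obtain ⟨t, rfl⟩ : ∃ t, Circle.exp t = z := ⟨_, Circle.exp_arg z⟩
  have hre : ((Circle.exp t : Circle) : ℂ).re = Real.cos t := by
    rw [Circle.coe_exp, Complex.exp_ofReal_mul_I_re]
  rw [hre, rhsP, map_sum, Finset.sum_apply, eval_finsetSum, Complex.ofReal_sum]
  refine Finset.sum_congr rfl fun m _ => ?_
  rw [map_add, Pi.add_apply, ev_single, ev_single, eval_mul, eval_C,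
    Polynomial.Chebyshev.T_real_cos, Circle.coe_exp, ← Complex.exp_int_mul, ← Complex.exp_int_mul]
  push_cast
  rw [Complex.cos]
  ring_nf

lemma rhsP_apply {M : ℕ} (c : Fin (M + 1) → ℝ) (m : Fin (M + 1)) :
    rhsP c ((m : ℕ) : ℤ) = if m = 0 then ((c m : ℝ) : ℂ) else ((c m : ℝ) : ℂ) / 2 := by
  have h1 : ∀ k : Fin (M + 1), (((k : ℕ) : ℤ) = ((m : ℕ) : ℤ)) = (k = m) := by
    intro k; rw [Fin.ext_iff]; simp
  have h2 : ∀ k : Fin (M + 1), (-((k : ℕ) : ℤ) = ((m : ℕ) : ℤ)) = (k = m ∧ m = 0) := by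
    intro k; rw [Fin.ext_iff, Fin.ext_iff]; simp only [Fin.val_zero]
    exact propext ⟨fun h => by omega, fun h => by omega⟩
  rw [rhsP, Finsupp.finsetSum_apply]
  simp only [Finsupp.add_apply, Finsupp.single_apply, h1, h2, Finset.sum_add_distrib]
  by_cases hm : m = 0
  · simp [hm]
  · simp [hm]

lemma rhsP_neg {M : ℕ} (c : Fin (M + 1) → ℝ) (m : ℤ) :
    rhsP c (-m) = (starRingEnd ℂ) (rhsP c m) := by
  rw [rhsP, Finsupp.finsetSum_apply, Finsupp.finsetSum_apply, map_sum]
  refine Finset.sum_congr rfl fun k _ => ?_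
  simp only [Finsupp.add_apply, Finsupp.single_apply, neg_inj]
  have h : (((k : ℕ) : ℤ) = -m) = (-((k : ℕ) : ℤ) = m) :=
    propext ⟨fun h => by omega, fun h => by omega⟩
  have hc : (starRingEnd ℂ) ((c k : ℂ) / 2) = (c k : ℂ) / 2 := by
    rw [map_div₀, Complex.conj_ofReal, Complex.conj_ofNat]
  simp only [h, map_add, apply_ite (starRingEnd ℂ), map_zero, hc]
  ring

lemma rhsP_zero {M : ℕ} (c : Fin (M + 1) → ℝ) (m : ℤ) (h : (M : ℤ) < m) : rhsP c m = 0 := by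
  rw [rhsP, Finsupp.finsetSum_apply]
  refine Finset.sum_eq_zero fun k _ => ?_
  have := k.2
  simp only [Finsupp.add_apply, Finsupp.single_apply]
  rw [if_neg (by omega), if_neg (by omega), add_zero]

lemma lhsP_neg {M : ℕ} (α : ℂ) (β : ℝ) (Q : Matrix (Fin (M + 1)) (Fin (M + 1)) ℂ)
    (R : Matrix (Fin M) (Fin M) ℂ) (hQ : Q.PosSemidef) (hR : R.PosSemidef) (m : ℤ) :
    lhsP α β Q R (-m) = (starRingEnd ℂ) (lhsP α β Q R m) := by
  have h1 := laur_neg Q hQ 0 m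
  have h2 := laur_neg R hR 0 m
  have h3 := laur_neg R hR 1 m
  have h4 := laur_neg R hR (-1) m
  rw [neg_zero] at h1 h2
  rw [neg_neg] at h4
  simp only [lhsP, Finsupp.add_apply, Finsupp.sub_apply, Finsupp.smul_apply, smul_eq_mul, map_add,
    map_sub, map_mul, h1, h2, h3, h4, Complex.conj_conj, Complex.conj_ofReal]
  ring

lemma sdpCert_iff (M : ℕ) (α : ℂ) (β : ℝ) (c : Fin (M + 1) → ℝ) :
    SdpCert M α β c ↔ ∃ (Q : Matrix (Fin (M + 1)) (Fin (M + 1)) ℂ) (R : Matrix (Fin M) (Fin M) ℂ),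
      Q.PosSemidef ∧ R.PosSemidef ∧ ∀ z : Circle, (((∑ m : Fin (M + 1),
      Polynomial.C (c m) * Polynomial.Chebyshev.T ℝ ((m : ℕ) : ℤ)).eval (z : ℂ).re : ℝ) : ℂ)
        = qform Q z + wt α β z * qform R z := by
  rw [SdpCert]
  refine exists_congr fun Q => exists_congr fun R => and_congr_right fun hQ =>
    and_congr_right fun hR => ?_
  have hfun : (∀ z : Circle, (((∑ m : Fin (M + 1),
      Polynomial.C (c m) * Polynomial.Chebyshev.T ℝ ((m : ℕ) : ℤ)).eval (z : ℂ).re : ℝ) : ℂ)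
        = qform Q z + wt α β z * qform R z) ↔ lhsP α β Q R = rhsP c := by
    rw [← ev_injective.eq_iff, funext_iff]
    refine forall_congr' fun z => ?_
    rw [ev_lhsP, ev_rhsP]
    exact eq_comm
  have happ : ∀ m : Fin (M + 1), _ := fun m =>
    show lhsP α β Q R ((m : ℕ) : ℤ) = _ by
      rw [lhsP, Finsupp.add_apply, Finsupp.sub_apply, Finsupp.add_apply, Finsupp.smul_apply,
        Finsupp.smul_apply, Finsupp.smul_apply, laur_apply Q 0 m m (by ring),
        laur_apply R 1 m _ rfl, laur_apply R 0 m m (by ring), laur_apply R (-1) m (m + 1) (by ring),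
        smul_eq_mul, smul_eq_mul, smul_eq_mul]
  rw [hfun]
  constructor
  · intro h
    have hpos : ∀ m : ℤ, 0 ≤ m → lhsP α β Q R m = rhsP c m := by
      intro m hm
      rcases lt_or_ge (M : ℤ) m with h1 | h1
      · rw [rhsP_zero c m h1, lhsP]
        simp only [Finsupp.add_apply, Finsupp.sub_apply, Finsupp.smul_apply]
        rw [laur_zero Q 0 m (by push_cast; omega), laur_zero R 1 m (by omega),
          laur_zero R 0 m (by omega), laur_zero R (-1) m (by omega)]
        simp
      · lift m to ℕ using hm
        have h2 := h ⟨m, by omega⟩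
        rw [← happ, ← rhsP_apply c] at h2
        exact h2
    ext m
    rcases le_or_gt 0 m with hm | hm
    · exact hpos m hm
    · have := hpos (-m) (by omega)
      rw [← neg_neg m, lhsP_neg α β Q R hQ hR, rhsP_neg, this]
  · intro h m
    rw [← happ, ← rhsP_apply c, h]

/-- A polynomial `C = ∑_{m=0}^M c_m T_m` (Chebyshev expansion) is nonnegative on
`[a,b] ⊆ [-1,1]` iff the semidefinite certificate with
`α = (1/2) exp(i (arccos a + arccos b)/2)` and `β = cos((arccos a − arccos b)/2)` exists. -/
theorem chebyshev_nonneg_iff_sdpCert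
    (a b : ℝ) (ha : -1 ≤ a) (hab : a < b) (hb : b ≤ 1)
    (M : ℕ) (c : Fin (M + 1) → ℝ) (Cpoly : Polynomial ℝ)
    (hC : Cpoly = ∑ m : Fin (M + 1),
      Polynomial.C (c m) * Polynomial.Chebyshev.T ℝ ((m : ℕ) : ℤ))
    (α : ℂ)
    (hα : α = (1 / 2) * Complex.exp (Complex.I *
      (((Real.arccos a + Real.arccos b) / 2 : ℝ) : ℂ)))
    (β : ℝ) (hβ : β = Real.cos ((Real.arccos a - Real.arccos b) / 2)) :
    (∀ x ∈ Set.Icc a b, 0 ≤ Cpoly.eval x) ↔ SdpCert M α β c := by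
  rw [sdpCert_iff, ← hC]
  have hA1 : Real.cos (Real.arccos a) = a := Real.cos_arccos ha (by linarith)
  have hB1 : Real.cos (Real.arccos b) = b := Real.cos_arccos (by linarith) hb
  have hAB : Real.arccos b < Real.arccos a :=
    Real.strictAntiOn_arccos ⟨ha, by linarith⟩ ⟨by linarith, hb⟩ hab
  have hB0 := Real.arccos_nonneg b
  have hAπ := Real.arccos_le_pi a
  set A := Real.arccos a with hA
  set B := Real.arccos b with hB
  obtain ⟨φ, hφ⟩ : ∃ φ, φ = (A + B) / 2 := ⟨_, rfl⟩
  obtain ⟨δ, hδ⟩ : ∃ δ, δ = (A - B) / 2 := ⟨_, rfl⟩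
  have hAe : A = φ + δ := by rw [hφ, hδ]; ring
  have hBe : B = φ - δ := by rw [hφ, hδ]; ring
  have hw : ∀ z : Circle, wt α β z
      = (z : ℂ).re * Real.cos φ - (z : ℂ).im * Real.sin φ - Real.cos δ := by
    intro z
    rw [wt, hβ, hα, ← hφ, ← hδ, mul_comm Complex.I, Complex.exp_mul_I, ← Complex.ofReal_cos,
      ← Complex.ofReal_sin]
    generalize Real.cos φ = x
    generalize Real.sin φ = y
    simp [Complex.mul_re, Complex.mul_im]
    ring
  constructor
  · intro h
    have hdeg : Cpoly.natDegree ≤ M := by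
      rw [hC]
      refine natDegree_sum_le_of_forall_le _ _ fun m _ => ?_
      refine (natDegree_C_mul_le _ _).trans ?_
      have := m.2
      rw [Polynomial.Chebyshev.natDegree_T]
      simp; omega
    have hsδ : 0 < Real.sin δ := Real.sin_pos_of_pos_of_lt_pi (by linarith) (by linarith)
    have hsφ : 0 ≤ Real.sin φ := Real.sin_nonneg_of_nonneg_of_le_pi (by linarith) (by linarith)
    have hsA : 0 ≤ Real.sin A := Real.sin_nonneg_of_nonneg_of_le_pi (by linarith) (by linarith)
    have hsB : 0 ≤ Real.sin B := Real.sin_nonneg_of_nonneg_of_le_pi (by linarith) (by linarith)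
    have hδ2 := Real.sin_sq_add_cos_sq δ
    have hφ2 := Real.sin_sq_add_cos_sq φ
    have hca : a = Real.cos φ * Real.cos δ - Real.sin φ * Real.sin δ := by
      rw [← Real.cos_add, ← hAe, hA1]
    have hcb : b = Real.cos φ * Real.cos δ + Real.sin φ * Real.sin δ := by
      rw [← Real.cos_sub, ← hBe, hB1]
    have hSA : Real.sin A = Real.sin φ * Real.cos δ + Real.cos φ * Real.sin δ := by
      rw [← Real.sin_add, ← hAe]
    have hSB : Real.sin B = Real.sin φ * Real.cos δ - Real.cos φ * Real.sin δ := by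
      rw [← Real.sin_sub, ← hBe]
    have hb1 : b * Real.sin δ = -(Real.sin B * Real.cos δ) + Real.sin φ := by
      rw [hSB]
      linear_combination Real.sin δ * hcb + Real.sin φ * hδ2
    have hb2 : -Real.sin δ = Real.sin B * Real.cos φ - Real.sin φ * b := by
      rw [hSB]
      linear_combination Real.sin φ * hcb + Real.sin δ * hφ2
    have ha1 : -(a * Real.sin δ) = -(Real.sin A * Real.cos δ) + Real.sin φ := by
      rw [hSA]
      linear_combination -Real.sin δ * hca + Real.sin φ * hδ2
    have ha2 : Real.sin δ = Real.sin A * Real.cos φ - Real.sin φ * a := by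
      rw [hSA]
      linear_combination Real.sin φ * hca - Real.sin δ * hφ2
    have key := nonneg_induct (fun n p => (fun z : Circle => p.eval (z : ℂ).re) ∈ cone α β n) a b
      (fun m n p q hp hq => by
        have := cone_mul α β m n _ _ hp hq
        convert this using 1
        funext z; simp)
      (fun c hc => by simpa using cone_C α β c hc)
      (fun r hr => by
        have := cone_one_sub α β B (r - b) (Real.sin φ / Real.sin δ) (Real.sin B / Real.sin δ)
          (by positivity) (by positivity) (by linarith)
        convert this using 1
        funext z
        simp only [eval_sub, eval_C, eval_X]
        rw [hw z]
        rw [hB1]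
        field_simp
        linear_combination hb1 + (z : ℂ).re * hb2)
      (fun r hr => by
        have := cone_one_sub α β A (a - r) (Real.sin φ / Real.sin δ) (Real.sin A / Real.sin δ)
          (by positivity) (by positivity) (by linarith)
        convert this using 1
        funext z
        simp only [eval_sub, eval_C, eval_X]
        rw [hw z]
        rw [hA1]
        field_simp
        linear_combination ha1 + (z : ℂ).re * ha2)
      (fun u v => by simpa using cone_quad α β u v) hab _ Cpoly rfl
      (fun x h1 h2 => h x ⟨h1.le, h2.le⟩)
    exact cone_psd α β M _ (cone_mono α β hdeg key)
  · rintro ⟨Q, R, hQ, hR, h⟩ x ⟨hxa, hxb⟩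
    have hx := h (Circle.exp (-Real.arccos x))
    have h1 : Real.cos (Real.arccos x) = x := Real.cos_arccos (by linarith) (by linarith)
    have hre : ((Circle.exp (-Real.arccos x) : Circle) : ℂ).re = x := by
      rw [Circle.coe_exp, Complex.exp_ofReal_mul_I_re, Real.cos_neg, h1]
    have him : ((Circle.exp (-Real.arccos x) : Circle) : ℂ).im = - Real.sin (Real.arccos x) := by
      rw [Circle.coe_exp, Complex.exp_ofReal_mul_I_im, Real.sin_neg]
    have hwn : 0 ≤ wt α β (Circle.exp (-Real.arccos x)) := by
      rw [hw, hre, him]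
      have hle1 : Real.arccos x ≤ A := Real.antitone_arccos hxa
      have hle2 : B ≤ Real.arccos x := Real.antitone_arccos hxb
      have : Real.cos δ ≤ Real.cos (Real.arccos x - φ) := by
        rw [← Real.cos_abs (Real.arccos x - φ)]
        refine Real.cos_le_cos_of_nonneg_of_le_pi (abs_nonneg _) (by linarith) ?_
        rw [abs_le]
        constructor <;> linarith
      rw [Real.cos_sub, h1] at this
      linarith
    rw [hre] at hx
    have : (0 : ℂ) ≤ ((Cpoly.eval x : ℝ) : ℂ) := by
      rw [hx]
      exact add_nonneg (qform_nonneg Q hQ _)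
        (mul_nonneg (by exact_mod_cast hwn) (qform_nonneg R hR _))
    exact_mod_cast this
end

section
/- Let K = ⋃_{ℓ=1}^L [a_ℓ, b_ℓ] ⊆ [−1,1] with −1 = a_1 < b_1 < a_2 < b_2 < ⋯ < a_L < b_L = 1, let Σ and Ω be real polynomials that are strictly positive on each [a_ℓ, b_ℓ], let w = Σ/Ω, let N ≥ 1 and M = max(deg Σ, deg Ω + N). For a real polynomial P of degree at most N and c ∈ ℝ, the following are equivalent: (i) |Ω(x)P(x)/Σ(x)| ≤ c for all x ∈ K; (ii) for each ℓ = 1,…,L and each choice of sign ±, the polynomial c·Σ ± Ω·P (of degree ≤ M) is nonnegative on [a_ℓ, b_ℓ], i.e. there exist Hermitian positive semidefinite matrices Q^{±,ℓ} ∈ ℂ^{(M+1)×(M+1)} and R^{±,ℓ} ∈ ℂ^{M×M} satisfying, for m = 0,…,M, Σ_{i−j=m} Q^{±,ℓ}_{i,j} + α_ℓ Σ_{i−j=m−1} R^{±,ℓ}_{i,j} − β_ℓ Σ_{i−j=m} R^{±,ℓ}_{i,j} + conj(α_ℓ) Σ_{i−j=m+1} R^{±,ℓ}_{i,j} = (1/2)σ_m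 c ± (1/2)(ΩP)-coefficient_m for m ≥ 1 and = σ_0 c ± (ΩP)-coefficient_0 for m = 0, where α_ℓ = (1/2)exp(i(arccos(a_ℓ)+arccos(b_ℓ))/2), β_ℓ = cos((arccos(a_ℓ)−arccos(b_ℓ))/2), Σ = Σ_m σ_m T_m and ΩP = Σ_m (ΩP)-coefficient_m · T_m are Chebyshev expansions. Consequently, the minimum value of c over all (c, P) with P monic of degree N satisfying these semidefinite constraints equals min{ ‖P/w‖_K : P monic of degree N }, where ‖·‖_K is the sup norm on K. -/
open scoped ComplexOrder

open Polynomial in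
theorem aux_sos (n : ℕ) : ∀ G : Polynomial ℝ, G.natDegree ≤ 2 * n → (∀ x, 0 ≤ G.eval x) →
    ∃ A B : Polynomial ℝ, A.natDegree ≤ n ∧ B.natDegree ≤ n ∧ G = A ^ 2 + B ^ 2 := by
  induction n with
  | zero =>
    intro G hG hpos
    obtain ⟨c, rfl⟩ := Polynomial.natDegree_eq_zero.1 (Nat.le_zero.1 (by simpa using hG))
    have hc : 0 ≤ c := by simpa using hpos 0
    refine ⟨C (Real.sqrt c), 0, by simp, by simp, ?_⟩
    rw [← C_pow, Real.sq_sqrt hc]; simp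
  | succ n ih =>
    intro G hG hpos
    by_cases hd : G.natDegree = 0
    · obtain ⟨c, rfl⟩ := Polynomial.natDegree_eq_zero.1 hd
      have hc : 0 ≤ c := by simpa using hpos 0
      refine ⟨C (Real.sqrt c), 0, by simp, by simp, ?_⟩
      rw [← C_pow, Real.sq_sqrt hc]; simp
    have hG0 : G ≠ 0 := by rintro rfl; simp at hd
    obtain ⟨z, hz⟩ := IsAlgClosed.exists_aeval_eq_zero ℂ G (by
      rw [Polynomial.degree_eq_natDegree hG0]; exact_mod_cast hd)
    by_cases him : z.im = 0
    · -- real root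
      have hzr : z = ((z.re : ℝ) : ℂ) := by apply Complex.ext <;> simp [him]
      set w := z.re with hw
      have hroot : G.eval w = 0 := by
        rw [hzr] at hz
        have : (aeval ((w : ℝ) : ℂ)) G = ((G.eval w : ℝ) : ℂ) := by
          rw [← Complex.coe_algebraMap, Polynomial.aeval_algebraMap_apply]; simp
        rw [this] at hz
        exact_mod_cast hz
      obtain ⟨K, hK⟩ := Polynomial.dvd_iff_isRoot.2 hroot
      have hKc : Continuous fun x => K.eval x := K.continuous
      have hGe : ∀ x, G.eval x = (x - w) * K.eval x := by intro x; rw [hK]; simp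
      have hKw : K.eval w = 0 := by
        apply le_antisymm
        · have ht : Filter.Tendsto (fun x => K.eval x) (nhdsWithin w (Set.Iio w)) (nhds (K.eval w)) :=
            hKc.continuousAt.tendsto.mono_left nhdsWithin_le_nhds
          refine le_of_tendsto ht ?_
          filter_upwards [self_mem_nhdsWithin] with x hx
          have h1 := hpos x
          rw [hGe] at h1
          have : x - w < 0 := sub_neg.2 hx
          by_contra hcon
          push Not at hcon
          nlinarith
        · have ht : Filter.Tendsto (fun x => K.eval x) (nhdsWithin w (Set.Ioi w)) (nhds (K.eval w)) :=
            hKc.continuousAt.tendsto.mono_left nhdsWithin_le_nhds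
          refine ge_of_tendsto ht ?_
          filter_upwards [self_mem_nhdsWithin] with x hx
          have h1 := hpos x
          rw [hGe] at h1
          have : 0 < x - w := sub_pos.2 hx
          by_contra hcon
          push Not at hcon
          nlinarith
      obtain ⟨G2, hG2⟩ := Polynomial.dvd_iff_isRoot.2 hKw
      have hGG : G = (X - C w) ^ 2 * G2 := by rw [hK, hG2]; ring
      have hG20 : G2 ≠ 0 := by rintro rfl; simp at hGG; exact hG0 hGG
      have hdeg : G.natDegree = 2 + G2.natDegree := by
        rw [hGG, Polynomial.natDegree_mul (pow_ne_zero _ (X_sub_C_ne_zero w)) hG20]; simp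
      have hp2 : ∀ x, x ≠ w → 0 ≤ G2.eval x := by
        intro x hx
        have h1 := hpos x
        rw [hGG] at h1
        simp only [eval_mul, eval_pow, eval_sub, eval_X, eval_C] at h1
        exact nonneg_of_mul_nonneg_right h1 (by have := sub_ne_zero.2 hx; positivity)
      have hp2' : ∀ x, 0 ≤ G2.eval x := by
        intro x
        by_cases hx : x = w
        · have ht : Filter.Tendsto (fun x => G2.eval x) (nhdsWithin x (Set.Ioi x)) (nhds (G2.eval x)) :=
            G2.continuous.continuousAt.tendsto.mono_left nhdsWithin_le_nhds
          refine ge_of_tendsto ht ?_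
          filter_upwards [self_mem_nhdsWithin] with y hy
          exact hp2 y (by rw [← hx]; exact ne_of_gt hy)
        · exact hp2 x hx
      obtain ⟨A, B, hA, hB, hAB⟩ := ih G2 (by omega) hp2'
      refine ⟨(X - C w) * A, (X - C w) * B, ?_, ?_, by rw [hGG, hAB]; ring⟩
      · refine Polynomial.natDegree_mul_le.trans ?_
        rw [natDegree_X_sub_C]; omega
      · refine Polynomial.natDegree_mul_le.trans ?_
        rw [natDegree_X_sub_C]; omega
    · obtain ⟨G2, hG2⟩ := Polynomial.quadratic_dvd_of_aeval_eq_zero_im_ne_zero G hz him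
      have hq : (X ^ 2 - C (2 * z.re) * X + C (‖z‖ ^ 2) : Polynomial ℝ)
          = (X - C z.re) ^ 2 + C z.im ^ 2 := by
        rw [Complex.sq_norm, Complex.normSq_apply]
        simp only [C_add, C_mul]
        have : (C (2:ℝ)) = 2 := rfl
        rw [this]; ring
      rw [hq] at hG2
      have hne : ((X - C z.re) ^ 2 + C z.im ^ 2 : Polynomial ℝ) ≠ 0 := by
        intro h; rw [h] at hG2; simp at hG2; exact hG0 hG2
      have hG20 : G2 ≠ 0 := by rintro rfl; simp at hG2; exact hG0 hG2
      have hdq : ((X - C z.re) ^ 2 + C z.im ^ 2 : Polynomial ℝ).natDegree = 2 := by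
        rw [← C_pow, Polynomial.natDegree_add_C]; simp
      have hdeg : G.natDegree = 2 + G2.natDegree := by
        rw [hG2, Polynomial.natDegree_mul hne hG20, hdq]
      have hp2 : ∀ x, 0 ≤ G2.eval x := by
        intro x
        have h1 := hpos x
        rw [hG2] at h1
        simp only [eval_mul, eval_pow, eval_sub, eval_X, eval_C, eval_add] at h1
        exact nonneg_of_mul_nonneg_right h1 (by positivity)
      obtain ⟨A, B, hA, hB, hAB⟩ := ih G2 (by omega) hp2
      refine ⟨(X - C z.re) * A + C z.im * B, (X - C z.re) * B - C z.im * A, ?_, ?_,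
        by rw [hG2, hAB]; ring⟩
      · refine (Polynomial.natDegree_add_le _ _).trans (max_le ?_ ?_)
        · refine Polynomial.natDegree_mul_le.trans ?_
          rw [natDegree_X_sub_C]; omega
        · refine Polynomial.natDegree_mul_le.trans ?_
          rw [natDegree_C]; omega
      · refine (Polynomial.natDegree_sub_le _ _).trans (max_le ?_ ?_)
        · refine Polynomial.natDegree_mul_le.trans ?_
          rw [natDegree_X_sub_C]; omega
        · refine Polynomial.natDegree_mul_le.trans ?_
          rw [natDegree_C]; omega

open Polynomial in
/-- even / odd splitting -/
theorem aux_evenodd (n : ℕ) (A : Polynomial ℝ) (hA : A.natDegree ≤ 2 * (n + 1)) :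
    ∃ A0 A1 : Polynomial ℝ, A0.natDegree ≤ n + 1 ∧ A1.natDegree ≤ n ∧
      ∀ t, A.eval t = A0.eval (t ^ 2) + t * A1.eval (t ^ 2) := by
  refine ⟨∑ k ∈ Finset.range (n + 2), C (A.coeff (2 * k)) * X ^ k,
    ∑ k ∈ Finset.range (n + 1), C (A.coeff (2 * k + 1)) * X ^ k, ?_, ?_, ?_⟩
  · refine natDegree_sum_le_of_forall_le _ _ fun k hk => ?_
    exact (natDegree_C_mul_X_pow_le _ _).trans (by have := Finset.mem_range.1 hk; omega)
  · refine natDegree_sum_le_of_forall_le _ _ fun k hk => ?_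
    exact (natDegree_C_mul_X_pow_le _ _).trans (by have := Finset.mem_range.1 hk; omega)
  · intro t
    rw [Polynomial.eval_eq_sum_range' (n := 2 * (n + 1) + 1) (by omega)]
    simp only [eval_finsetSum, eval_mul, eval_C, eval_pow, eval_X]
    have key : ∀ (c : ℕ → ℝ) (m : ℕ), ∑ i ∈ Finset.range (2 * m + 1), c i * t ^ i
        = ∑ k ∈ Finset.range (m + 1), c (2 * k) * (t ^ 2) ^ k
          + t * ∑ k ∈ Finset.range m, c (2 * k + 1) * (t ^ 2) ^ k := by
      intro c m
      induction m with
      | zero => simp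
      | succ m ih =>
        rw [show 2 * (m + 1) + 1 = (2 * m + 1) + 1 + 1 by ring, Finset.sum_range_succ,
          Finset.sum_range_succ, ih, Finset.sum_range_succ _ (m + 1), Finset.sum_range_succ _ m]
        rw [show 2 * (m + 1) = 2 * m + 1 + 1 by ring]
        rw [Finset.sum_range_succ _ m]
        ring
    exact key _ _

theorem aux_halfline (n : ℕ) (G : Polynomial ℝ) (hG : G.natDegree ≤ 2 * (n + 1))
    (hpos : ∀ s, 0 ≤ s → 0 ≤ G.eval s) :
    ∃ A0 B0 A1 B1 : Polynomial ℝ, A0.natDegree ≤ n + 1 ∧ B0.natDegree ≤ n + 1 ∧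
      A1.natDegree ≤ n ∧ B1.natDegree ≤ n ∧
      ∀ s, 0 ≤ s → G.eval s = A0.eval s ^ 2 + B0.eval s ^ 2
        + s * (A1.eval s ^ 2 + B1.eval s ^ 2) := by
  obtain ⟨A, B, hA, hB, h⟩ := aux_sos (2 * (n + 1)) (G.comp (Polynomial.X ^ 2)) (by
      rw [Polynomial.natDegree_comp, Polynomial.natDegree_X_pow]; omega)
    (fun x => by simpa using hpos (x ^ 2) (sq_nonneg x))
  obtain ⟨A0, A1, hA0, hA1, eA⟩ := aux_evenodd n A hA
  obtain ⟨B0, B1, hB0, hB1, eB⟩ := aux_evenodd n B hB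
  refine ⟨A0, B0, A1, B1, hA0, hB0, hA1, hB1, fun s hs => ?_⟩
  have e : ∀ t, G.eval (t ^ 2) = A.eval t ^ 2 + B.eval t ^ 2 := by
    intro t
    have := congrArg (Polynomial.eval t) h
    simpa using this
  have e1 := e (Real.sqrt s)
  have e2 := e (- Real.sqrt s)
  rw [eA, eB] at e1 e2
  rw [neg_sq] at e2
  rw [Real.sq_sqrt hs] at e1 e2
  have hq := Real.sq_sqrt hs
  rw [← sub_eq_zero]
  linear_combination (e1 + e2) / 2 + (A1.eval s ^ 2 + B1.eval s ^ 2) * hq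

open Polynomial in
theorem aux_homog {F : Type*} [Field F] (n e : ℕ) (A u v : Polynomial F) (hA : A.natDegree ≤ n)
    (hu : u.natDegree ≤ e) (hv : v.natDegree ≤ e) :
    ∃ G : Polynomial F, G.natDegree ≤ n * e ∧
      ∀ x, v.eval x ≠ 0 → G.eval x = v.eval x ^ n * A.eval (u.eval x / v.eval x) := by
  refine ⟨∑ k ∈ Finset.range (n + 1), C (A.coeff k) * (u ^ k * v ^ (n - k)), ?_, ?_⟩
  · refine natDegree_sum_le_of_forall_le _ _ fun k hk => ?_
    refine (natDegree_C_mul_le _ _).trans (natDegree_mul_le.trans ?_)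
    have h1 := natDegree_pow_le_of_le k hu
    have h2 := natDegree_pow_le_of_le (n - k) hv
    have h3 : k + (n - k) = n := by have := Finset.mem_range.1 hk; omega
    calc _ ≤ k * e + (n - k) * e := add_le_add h1 h2
      _ = n * e := by rw [← add_mul, h3]
  · intro x hx
    rw [Polynomial.eval_eq_sum_range' (p := A) (n := n + 1) (by omega), Finset.mul_sum]
    simp only [eval_finsetSum, eval_mul, eval_C, eval_pow]
    refine Finset.sum_congr rfl fun k hk => ?_
    have h3 : n = k + (n - k) := by have := Finset.mem_range.1 hk; omega
    have : eval x v ^ n = eval x v ^ k * eval x v ^ (n - k) := by rw [← pow_add, ← h3]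
    rw [this, div_pow]
    field_simp

open Polynomial in
theorem aux_cheb_expand (n : ℕ) : ∀ A : Polynomial ℝ, A.natDegree ≤ n →
    ∃ τ : Fin (n + 1) → ℝ, A = ∑ m : Fin (n + 1), C (τ m) * Chebyshev.T ℝ ((m : ℕ) : ℤ) := by
  induction n with
  | zero =>
    intro A hA
    obtain ⟨c, rfl⟩ := Polynomial.natDegree_eq_zero.1 (Nat.le_zero.1 hA)
    exact ⟨fun _ => c, by simp⟩
  | succ n ih =>
    intro A hA
    have hd : (Chebyshev.T ℝ ((n + 1 : ℕ) : ℤ)).natDegree = n + 1 := by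
      rw [Chebyshev.natDegree_T, Int.natAbs_natCast]
    set l := (Chebyshev.T ℝ ((n + 1 : ℕ) : ℤ)).leadingCoeff with hl
    have hl0 : l ≠ 0 := by
      rw [hl]; apply leadingCoeff_ne_zero.2
      intro h; rw [h] at hd; simp at hd
    obtain ⟨τ, hτ⟩ := ih (A - C (A.coeff (n + 1) / l) * Chebyshev.T ℝ ((n + 1 : ℕ) : ℤ)) (by
      rw [natDegree_le_iff_coeff_eq_zero]
      intro k hk
      rcases Nat.lt_or_ge (n + 1) k with h | h
      · rw [coeff_sub, coeff_C_mul, coeff_eq_zero_of_natDegree_lt (by omega),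
          coeff_eq_zero_of_natDegree_lt (p := Chebyshev.T _ _) (by omega)]
        simp
      · have : k = n + 1 := by omega
        subst this
        have : (Chebyshev.T ℝ ((n + 1 : ℕ) : ℤ)).coeff (n + 1) = l := by
          rw [hl, leadingCoeff, hd]
        rw [coeff_sub, coeff_C_mul, this]
        field_simp; simp)
    refine ⟨Fin.snoc τ (A.coeff (n + 1) / l), ?_⟩
    rw [Fin.sum_univ_castSucc]
    simp only [Fin.snoc_castSucc, Fin.snoc_last, Fin.val_castSucc, Fin.val_last]
    rw [← hτ]; ring


/-- diagonal sums -/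
noncomputable def auxDiag {n : ℕ} (Q : Matrix (Fin n) (Fin n) ℂ) (k : ℤ) : ℂ :=
  ∑ p ∈ Finset.univ.filter
          (fun p : Fin n × Fin n => ((p.1 : ℕ) : ℤ) - ((p.2 : ℕ) : ℤ) = k), Q p.1 p.2

noncomputable def auxGen {n : ℕ} (Q : Matrix (Fin n) (Fin n) ℂ) (z : ℂ) : ℂ :=
  ∑ p : Fin n × Fin n, Q p.1 p.2 * z ^ (((p.1 : ℕ) : ℤ) - ((p.2 : ℕ) : ℤ))

theorem auxDiag_sum {n : ℕ} (Q : Matrix (Fin n) (Fin n) ℂ) (k : ℤ) (I : Finset ℤ)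
    (hI : ∀ p : Fin n × Fin n, ((p.1 : ℕ) : ℤ) - ((p.2 : ℕ) : ℤ) + k ∈ I) (z : ℂ) (hz : z ≠ 0) :
    ∑ m ∈ I, auxDiag Q (m - k) * z ^ m = z ^ k * auxGen Q z := by
  unfold auxDiag auxGen
  rw [Finset.mul_sum, ← Finset.sum_fiberwise_of_maps_to (s := Finset.univ) (t := I)
    (g := fun p : Fin n × Fin n => ((p.1 : ℕ) : ℤ) - ((p.2 : ℕ) : ℤ) + k) (fun p _ => hI p)]
  refine Finset.sum_congr rfl fun m _ => ?_
  rw [Finset.sum_mul]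
  refine Finset.sum_congr ?_ ?_
  · ext p; simp only [Finset.mem_filter, Finset.mem_univ, true_and]; omega
  · intro p hp
    have : m = k + (((p.1 : ℕ) : ℤ) - ((p.2 : ℕ) : ℤ)) := by
      have := (Finset.mem_filter.1 hp).2
      omega
    rw [this, zpow_add₀ hz]; ring

theorem auxDiag_neg {n : ℕ} (Q : Matrix (Fin n) (Fin n) ℂ) (hQ : Q.IsHermitian) (k : ℤ) :
    auxDiag Q (-k) = (starRingEnd ℂ) (auxDiag Q k) := by
  unfold auxDiag
  rw [map_sum]
  refine Finset.sum_bij (fun p _ => (p.2, p.1)) ?_ ?_ ?_ ?_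
  · intro p hp
    simp only [Finset.mem_filter, Finset.mem_univ, true_and] at hp ⊢
    omega
  · rintro ⟨a, b⟩ _ ⟨c, d⟩ _ h
    simp at h ⊢; tauto
  · rintro ⟨a, b⟩ h
    refine ⟨(b, a), ?_, rfl⟩
    simp only [Finset.mem_filter, Finset.mem_univ, true_and] at h ⊢
    omega
  · rintro ⟨a, b⟩ _
    exact (hQ.apply a b).symm

theorem auxGen_nonneg {n : ℕ} (Q : Matrix (Fin n) (Fin n) ℂ) (hQ : Q.PosSemidef) (z : ℂ)
    (hz : ‖z‖ = 1) : 0 ≤ auxGen Q z := by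
  have h := hQ.dotProduct_mulVec_nonneg (fun j => z ^ (-((j : ℕ) : ℤ)))
  have hz0 : z ≠ 0 := by rintro rfl; simp at hz
  have hc : (starRingEnd ℂ) z = z⁻¹ := (Complex.inv_eq_conj hz).symm
  convert h using 1
  unfold auxGen
  rw [Fintype.sum_prod_type]
  simp only [dotProduct, Matrix.mulVec, Pi.star_apply, Finset.mul_sum]
  refine Finset.sum_congr rfl fun i _ => Finset.sum_congr rfl fun j _ => ?_
  rw [sub_eq_add_neg, zpow_add₀ hz0]
  have : star (z ^ (-((i : ℕ) : ℤ))) = z ^ ((i : ℕ) : ℤ) := by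
    change (starRingEnd ℂ) _ = _
    rw [map_zpow₀, hc, inv_zpow', neg_neg]
  rw [this]; ring

theorem auxGen_vecMulVec {n : ℕ} (q : Polynomial ℂ) (hq : q.natDegree < n) (z : ℂ)
    (hz : ‖z‖ = 1) :
    auxGen (Matrix.vecMulVec (fun i : Fin n => q.coeff i) (star (fun i : Fin n => q.coeff i))) z
      = q.eval z * (starRingEnd ℂ) (q.eval z) := by
  have hz0 : z ≠ 0 := by rintro rfl; simp at hz
  have hc : (starRingEnd ℂ) z = z⁻¹ := (Complex.inv_eq_conj hz).symm
  unfold auxGen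
  rw [Polynomial.eval_eq_sum_range' hq, Finset.sum_range, map_sum, Finset.sum_mul_sum,
    Fintype.sum_prod_type]
  refine Finset.sum_congr rfl fun i _ => Finset.sum_congr rfl fun j _ => ?_
  simp only [Matrix.vecMulVec_apply, Pi.star_apply, map_mul, map_pow, hc]
  rw [zpow_sub₀ hz0]
  simp only [zpow_natCast, inv_pow, div_eq_mul_inv]
  change _ * (starRingEnd ℂ) _ * _ = _
  ring

theorem auxGen_add {n : ℕ} (Q R : Matrix (Fin n) (Fin n) ℂ) (z : ℂ) :
    auxGen (Q + R) z = auxGen Q z + auxGen R z := by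
  simp [auxGen, add_mul, Finset.sum_add_distrib]

theorem auxGen_smul {n : ℕ} (c : ℂ) (Q : Matrix (Fin n) (Fin n) ℂ) (z : ℂ) :
    auxGen (c • Q) z = c * auxGen Q z := by
  simp [auxGen, mul_assoc, Finset.mul_sum]

noncomputable def auxE {M : ℕ} (Q : Matrix (Fin (M + 1)) (Fin (M + 1)) ℂ) (R : Matrix (Fin M) (Fin M) ℂ)
    (α : ℂ) (β : ℝ) (m : ℤ) : ℂ :=
  auxDiag Q m + α * auxDiag R (m - 1) - (β : ℂ) * auxDiag R m
    + (starRingEnd ℂ) α * auxDiag R (m + 1)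

theorem auxE_sum {M : ℕ} (Q : Matrix (Fin (M + 1)) (Fin (M + 1)) ℂ) (R : Matrix (Fin M) (Fin M) ℂ)
    (α : ℂ) (β : ℝ) (z : ℂ) (hz : z ≠ 0) :
    ∑ m ∈ Finset.Icc (-(M : ℤ)) M, auxE Q R α β m * z ^ m
      = auxGen Q z + (α * z - β + (starRingEnd ℂ) α * z⁻¹) * auxGen R z := by
  have h0 := auxDiag_sum Q 0 (Finset.Icc (-(M : ℤ)) M) (fun p => by
    rw [Finset.mem_Icc]; omega) z hz
  have h1 := auxDiag_sum R 1 (Finset.Icc (-(M : ℤ)) M) (fun p => by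
    rw [Finset.mem_Icc]; omega) z hz
  have h2 := auxDiag_sum R 0 (Finset.Icc (-(M : ℤ)) M) (fun p => by
    rw [Finset.mem_Icc]; omega) z hz
  have h3 := auxDiag_sum R (-1) (Finset.Icc (-(M : ℤ)) M) (fun p => by
    rw [Finset.mem_Icc]; omega) z hz
  simp only [sub_zero, zpow_zero, one_mul, zpow_one, sub_neg_eq_add, zpow_neg_one] at h0 h1 h2 h3
  have : ∀ m : ℤ, auxE Q R α β m * z ^ m = auxDiag Q m * z ^ m + α * (auxDiag R (m - 1) * z ^ m)
      - β * (auxDiag R m * z ^ m) + (starRingEnd ℂ) α * (auxDiag R (m + 1) * z ^ m) := by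
    intro m; unfold auxE; ring
  simp only [this, Finset.sum_add_distrib, Finset.sum_sub_distrib, ← Finset.mul_sum, h0, h1, h2, h3]
  ring

theorem auxE_neg {M : ℕ} (Q : Matrix (Fin (M + 1)) (Fin (M + 1)) ℂ) (R : Matrix (Fin M) (Fin M) ℂ)
    (hQ : Q.IsHermitian) (hR : R.IsHermitian)
    (α : ℂ) (β : ℝ) (m : ℤ) : auxE Q R α β (-m) = (starRingEnd ℂ) (auxE Q R α β m) := by
  unfold auxE
  rw [auxDiag_neg Q hQ, auxDiag_neg R hR, show -m - 1 = -(m + 1) by ring,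
    show -m + 1 = -(m - 1) by ring, auxDiag_neg R hR, auxDiag_neg R hR]
  simp only [map_add, map_sub, map_mul, Complex.conj_conj, Complex.conj_ofReal]
  ring

/-- two sided coefficients -/
noncomputable def auxRho {M : ℕ} (r : Fin (M + 1) → ℝ) (m : ℤ) : ℂ :=
  if h : m.natAbs < M + 1 then
    (if m = 0 then ((r ⟨m.natAbs, h⟩ : ℝ) : ℂ) else ((r ⟨m.natAbs, h⟩ : ℝ) : ℂ) / 2) else 0

theorem aux_sum_Icc (g : ℤ → ℂ) (M : ℕ) : ∑ m ∈ Finset.Icc (-(M : ℤ)) M, g m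
    = g 0 + ∑ k ∈ Finset.range M, (g ((k : ℤ) + 1) + g (-((k : ℤ) + 1))) := by
  induction M with
  | zero => simp
  | succ M ih =>
    rw [Finset.sum_range_succ, ← add_assoc, ← ih]
    have : Finset.Icc (-((M + 1 : ℕ) : ℤ)) ((M + 1 : ℕ) : ℤ)
        = insert ((M : ℤ) + 1) (insert (-((M : ℤ) + 1)) (Finset.Icc (-(M : ℤ)) M)) := by
      ext x; simp only [Finset.mem_insert, Finset.mem_Icc]; omega
    rw [this, Finset.sum_insert, Finset.sum_insert]
    · ring
    · simp only [Finset.mem_Icc]; omega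
    · simp only [Finset.mem_insert, Finset.mem_Icc]; omega

theorem auxRho_sum {M : ℕ} (r : Fin (M + 1) → ℝ) (z : ℂ) (hz : ‖z‖ = 1) :
    ∑ m ∈ Finset.Icc (-(M : ℤ)) M, auxRho r m * z ^ m
      = (((∑ m : Fin (M + 1), r m * (Polynomial.Chebyshev.T ℝ ((m : ℕ) : ℤ)).eval z.re) : ℝ) : ℂ) := by
  have hz0 : z ≠ 0 := by rintro rfl; simp at hz
  have hc : (starRingEnd ℂ) z = z⁻¹ := (Complex.inv_eq_conj hz).symm
  have hre : z.re = Real.cos z.arg := by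
    rw [Complex.cos_arg hz0, hz, div_one]
  have hze : z = Complex.exp (Complex.I * z.arg) := by
    have := Complex.norm_mul_exp_arg_mul_I z
    rw [hz] at this
    rw [mul_comm]; simpa using this.symm
  rw [aux_sum_Icc, Fin.sum_univ_succ]
  push_cast
  congr 1
  · simp [auxRho]
  · rw [Finset.sum_range]
    refine Finset.sum_congr rfl fun k _ => ?_
    have hk : ((k : ℕ) : ℤ) + 1 ≠ 0 := by omega
    have e1 : auxRho r (((k : ℕ) : ℤ) + 1) = (r k.succ : ℂ) / 2 := by
      unfold auxRho
      have : (((k : ℕ) : ℤ) + 1).natAbs = (k : ℕ) + 1 := by omega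
      simp only [this]
      rw [dif_pos (by omega), if_neg hk]
      rfl
    have e2 : auxRho r (-(((k : ℕ) : ℤ) + 1)) = (r k.succ : ℂ) / 2 := by
      unfold auxRho
      have : (-(((k : ℕ) : ℤ) + 1)).natAbs = (k : ℕ) + 1 := by omega
      simp only [this]
      rw [dif_pos (by omega), if_neg (by omega)]
      rfl
    rw [e1, e2, hre, Complex.ofReal_cos, Polynomial.Chebyshev.T_complex_cos]
    have hn : ∀ n : ℤ, z ^ n = Complex.exp (n * z.arg * Complex.I) := by
      intro n
      conv_lhs => rw [hze]
      rw [← Complex.exp_int_mul]; ring_nf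
    rw [hn, hn]
    push_cast
    rw [Complex.cos]
    simp only [Fin.val_succ]
    push_cast
    ring_nf

/-- coefficients are determined by values at infinitely many points -/
theorem aux_coeff_eq (M : ℕ) (f g : ℤ → ℂ) (S : Set ℂ) (hS : S.Infinite) (h0 : ∀ z ∈ S, z ≠ 0)
    (h : ∀ z ∈ S, ∑ m ∈ Finset.Icc (-(M : ℤ)) M, f m * z ^ m
      = ∑ m ∈ Finset.Icc (-(M : ℤ)) M, g m * z ^ m) (m : ℤ) (hm : m ∈ Finset.Icc (-(M : ℤ)) M) :
    f m = g m := by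
  set p : Polynomial ℂ := ∑ k ∈ Finset.Icc (-(M : ℤ)) M,
    Polynomial.C (f k - g k) * Polynomial.X ^ (k + M).toNat with hp
  have hp0 : p = 0 := by
    apply Polynomial.eq_zero_of_infinite_isRoot
    refine hS.mono fun z hz => ?_
    have hz0 := h0 z hz
    have e := h z hz
    rw [← sub_eq_zero, ← Finset.sum_sub_distrib] at e
    change p.eval z = 0
    rw [hp, Polynomial.eval_finsetSum]
    have : ∀ k ∈ Finset.Icc (-(M : ℤ)) M,
        (Polynomial.C (f k - g k) * Polynomial.X ^ (k + M).toNat).eval z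
        = z ^ M * (f k * z ^ k - g k * z ^ k) := by
      intro k hk
      rw [Finset.mem_Icc] at hk
      have e3 : z ^ (k + M).toNat = z ^ k * z ^ M := by
        rw [← zpow_natCast z (k + M).toNat, Int.toNat_of_nonneg (by omega), zpow_add₀ hz0,
          zpow_natCast]
      simp only [Polynomial.eval_mul, Polynomial.eval_C, Polynomial.eval_pow, Polynomial.eval_X, e3]
      ring
    rw [Finset.sum_congr rfl this, ← Finset.mul_sum, e, mul_zero]
  have hcoef := congrArg (fun q => Polynomial.coeff q (m + M).toNat) hp0
  simp only [hp, Polynomial.finsetSum_coeff, Polynomial.coeff_C_mul, Polynomial.coeff_X_pow,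
    Polynomial.coeff_zero] at hcoef
  rw [Finset.sum_eq_single m] at hcoef
  · simpa [sub_eq_zero] using hcoef
  · intro k hk hkm
    rw [Finset.mem_Icc] at hk hm
    rw [if_neg (by omega), mul_zero]
  · intro hcon; exact absurd hm hcon

open Polynomial in
theorem aux_pull (n : ℕ) (A : Polynomial ℝ) (hA : A.natDegree ≤ n) (κ ω : ℂ) (hκ : κ ≠ 0)
    (hω : (starRingEnd ℂ) ω - ω ≠ 0) :
    ∃ q : Polynomial ℂ, q.natDegree ≤ n ∧ ∀ (s : ℝ) (z : ℂ), (s : ℂ) + ω ≠ 0 →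
      z * ((s : ℂ) + ω) = κ * ((s : ℂ) + (starRingEnd ℂ) ω) →
      q.eval z * ((s : ℂ) + ω) ^ n = ((A.eval s : ℝ) : ℂ) := by
  obtain ⟨G, hG, hGe⟩ := aux_homog n 1 (A.map Complex.ofRealHom)
    (C (κ * (starRingEnd ℂ) ω) - C ω * X) (X - C κ) (natDegree_map_le.trans hA)
    ((natDegree_sub_le _ _).trans (max_le (by rw [natDegree_C]; omega)
      ((natDegree_C_mul_le _ _).trans natDegree_X_le)))
    (by rw [natDegree_X_sub_C])
  have hk : κ * ((starRingEnd ℂ) ω - ω) ≠ 0 := mul_ne_zero hκ hω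
  refine ⟨C ((κ * ((starRingEnd ℂ) ω - ω))⁻¹ ^ n) * G,
    (natDegree_C_mul_le _ _).trans (by simpa using hG), fun s z hD hz => ?_⟩
  have hv : (z - κ) * ((s : ℂ) + ω) = κ * ((starRingEnd ℂ) ω - ω) := by
    linear_combination hz
  have hv0 : z - κ ≠ 0 := by
    intro h; rw [h, zero_mul] at hv; exact hk hv.symm
  have e := hGe z (by simpa using hv0)
  have hs : (eval z (C (κ * (starRingEnd ℂ) ω) - C ω * X)) / eval z (X - C κ) = (s : ℂ) := by
    simp only [eval_sub, eval_mul, eval_C, eval_X]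
    rw [div_eq_iff hv0]
    linear_combination -hz
  rw [hs] at e
  rw [eval_mul, e, eval_C]
  have : eval (s : ℂ) (A.map Complex.ofRealHom) = ((A.eval s : ℝ) : ℂ) := by
    have := Polynomial.eval_map_apply (p := A) (f := Complex.ofRealHom) s
    simpa using this
  rw [this]
  simp only [eval_sub, eval_X, eval_C]
  calc _ = ((κ * ((starRingEnd ℂ) ω - ω))⁻¹ * ((z - κ) * ((s : ℂ) + ω))) ^ n
        * ((A.eval s : ℝ) : ℂ) := by rw [mul_pow, mul_pow]; ring
    _ = _ := by rw [hv, inv_mul_cancel₀ hk]; simp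

theorem aux_two_re (α z : ℂ) (β : ℝ) (hz : ‖z‖ = 1) :
    α * z - β + (starRingEnd ℂ) α * z⁻¹ = ((2 * (α * z).re - β : ℝ) : ℂ) := by
  have hc : z⁻¹ = (starRingEnd ℂ) z := Complex.inv_eq_conj hz
  rw [hc, ← map_mul]
  have := Complex.add_conj (α * z)
  push_cast at this ⊢
  linear_combination this

theorem aux_cert_forward (M : ℕ) (a b : ℝ) (ha : -1 ≤ a) (hb : b ≤ 1) (hab : a < b)
    (α : ℂ) (hα : α = (1 / 2) * Complex.exp (Complex.I *
      (((Real.arccos a + Real.arccos b) / 2 : ℝ) : ℂ)))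
    (β : ℝ) (hβ : β = Real.cos ((Real.arccos a - Real.arccos b) / 2))
    (r : Fin (M + 1) → ℝ) (h : SdpCert M α β r) (x : ℝ) (hx : x ∈ Set.Icc a b) :
    0 ≤ ∑ m : Fin (M + 1), r m * (Polynomial.Chebyshev.T ℝ ((m : ℕ) : ℤ)).eval x := by
  obtain ⟨Q, R, hQ, hR, hc⟩ := h
  have hc' : ∀ m : ℕ, m < M + 1 → auxE Q R α β (m : ℤ) = auxRho r (m : ℤ) := by
    intro m hm
    have := hc ⟨m, hm⟩
    unfold auxE auxDiag auxRho
    rw [dif_pos (by simpa using hm)]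
    simp only [Int.natAbs_natCast]
    refine this.trans ?_
    by_cases h0 : m = 0
    · subst h0; simp
    · rw [if_neg (by simpa [Fin.ext_iff] using h0), if_neg (by exact_mod_cast h0)]
  have hrho : ∀ m : ℤ, auxRho r (-m) = (starRingEnd ℂ) (auxRho r m) := by
    intro m
    unfold auxRho
    simp only [Int.natAbs_neg, neg_eq_zero]
    split_ifs <;> simp [Complex.conj_ofNat]
  have hall : ∀ m ∈ Finset.Icc (-(M : ℤ)) M, auxE Q R α β m = auxRho r m := by
    intro m hm
    rw [Finset.mem_Icc] at hm
    rcases le_total 0 m with h0 | h0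
    · obtain ⟨k, rfl⟩ := Int.eq_ofNat_of_zero_le h0
      exact hc' k (by omega)
    · obtain ⟨k, hk⟩ := Int.eq_ofNat_of_zero_le (a := -m) (by omega)
      have : m = -(k : ℤ) := by omega
      rw [this, hrho, auxE_neg Q R hQ.1 hR.1, hc' k (by omega)]
  set t := Real.arccos x with ht
  set z : ℂ := Complex.exp (((-t : ℝ) : ℂ) * Complex.I) with hz
  have hzn : ‖z‖ = 1 := Complex.norm_exp_ofReal_mul_I _
  have hz0 : z ≠ 0 := Complex.exp_ne_zero _
  have hzre : z.re = x := by
    rw [hz, Complex.exp_ofReal_mul_I_re, Real.cos_neg, ht,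
      Real.cos_arccos (ha.trans hx.1) (hx.2.trans hb)]
  have e1 := auxRho_sum r z hzn
  have e0 : ∑ m ∈ Finset.Icc (-(M : ℤ)) M, auxE Q R α β m * z ^ m
      = ∑ m ∈ Finset.Icc (-(M : ℤ)) M, auxRho r m * z ^ m :=
    Finset.sum_congr rfl (fun m hm => by rw [hall m hm])
  rw [← e0, auxE_sum Q R α β z hz0,
    aux_two_re α z β hzn, hzre] at e1
  have hre : 0 ≤ 2 * (α * z).re - β := by
    have : α * z = (1 / 2 : ℝ) * Complex.exp
        ((((Real.arccos a + Real.arccos b) / 2 - t : ℝ) : ℂ) * Complex.I) := by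
      rw [hα, hz, mul_assoc, ← Complex.exp_add]
      push_cast
      congr 2; ring
    rw [this, Complex.re_ofReal_mul, Complex.exp_ofReal_mul_I_re, hβ]
    have h1 : t ≤ Real.arccos a := Real.antitone_arccos hx.1
    have h2 : Real.arccos b ≤ t := Real.antitone_arccos hx.2
    have h3 : |(Real.arccos a + Real.arccos b) / 2 - t| ≤ (Real.arccos a - Real.arccos b) / 2 := by
      rw [abs_le]; constructor <;> linarith
    have h4 := Real.cos_le_cos_of_nonneg_of_le_pi (abs_nonneg _) (by
      have := Real.arccos_le_pi a
      have := Real.arccos_nonneg b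
      have := Real.pi_pos
      linarith) h3
    rw [Real.cos_abs] at h4
    linarith
  have hfin := add_nonneg (auxGen_nonneg Q hQ z hzn)
    (mul_nonneg (Complex.zero_le_real.2 hre) (auxGen_nonneg R hR z hzn))
  rw [e1] at hfin
  exact Complex.zero_le_real.1 hfin

theorem aux_cert_backward (n : ℕ) (a b : ℝ) (ha : -1 ≤ a) (hb : b ≤ 1) (hab : a < b)
    (α : ℂ) (hα : α = (1 / 2) * Complex.exp (Complex.I *
      (((Real.arccos a + Real.arccos b) / 2 : ℝ) : ℂ)))
    (β : ℝ) (hβ : β = Real.cos ((Real.arccos a - Real.arccos b) / 2))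
    (r : Fin (n + 1 + 1) → ℝ)
    (h : ∀ x ∈ Set.Icc a b,
      0 ≤ ∑ m : Fin (n + 1 + 1), r m * (Polynomial.Chebyshev.T ℝ ((m : ℕ) : ℤ)).eval x) :
    SdpCert (n + 1) α β r := by
  set B := Real.arccos b with hB
  set δ := (Real.arccos a - B) / 2 with hδ
  have hlt : B < Real.arccos a := Real.strictAntiOn_arccos ⟨ha, by linarith⟩ ⟨by linarith, hb⟩ hab
  have hB0 : 0 ≤ B := Real.arccos_nonneg b
  have hApi : Real.arccos a ≤ Real.pi := Real.arccos_le_pi a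
  have hpi := Real.pi_pos
  have hA : Real.arccos a = B + 2 * δ := by rw [hδ]; ring
  have hbc : b = Real.cos B := (Real.cos_arccos (by linarith) hb).symm
  have hac : a = Real.cos (B + 2 * δ) := by rw [← hA]; exact (Real.cos_arccos ha (by linarith)).symm
  have hsd : 0 < Real.sin δ := Real.sin_pos_of_pos_of_lt_pi (by linarith) (by linarith)
  have hcd : 0 ≤ Real.cos δ := Real.cos_nonneg_of_neg_pi_div_two_le_of_le (by linarith) (by linarith)
  have hsB : 0 ≤ Real.sin B := Real.sin_nonneg_of_nonneg_of_le_pi hB0 (by linarith)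
  have hsA : 0 ≤ Real.sin (B + 2 * δ) := by
    rw [← hA]; exact Real.sin_nonneg_of_nonneg_of_le_pi (by linarith) hApi
  have hα' : α = (1 / 2) * Complex.exp (((B + δ : ℝ) : ℂ) * Complex.I) := by
    rw [hα, mul_comm Complex.I]
    congr 4
    rw [hA]; ring
  have hφ1 : Real.cos (B + δ) = Real.cos B * Real.cos δ - Real.sin B * Real.sin δ := Real.cos_add _ _
  have hφ2 : Real.cos (B + δ) = Real.cos (B + 2 * δ) * Real.cos δ
      + Real.sin (B + 2 * δ) * Real.sin δ := by
    rw [← Real.cos_sub]; ring_nf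
  have hpy := Real.sin_sq_add_cos_sq δ
  set ω : ℂ := Complex.exp ((δ : ℂ) * Complex.I) with hω
  set κ : ℂ := Complex.exp (((-B : ℝ) : ℂ) * Complex.I) with hκ
  have hωre : ω.re = Real.cos δ := Complex.exp_ofReal_mul_I_re δ
  have hωim : ω.im = Real.sin δ := Complex.exp_ofReal_mul_I_im δ
  have hκ0 : κ ≠ 0 := Complex.exp_ne_zero _
  have hκn : ‖κ‖ = 1 := Complex.norm_exp_ofReal_mul_I _
  have hωω : (starRingEnd ℂ) ω - ω ≠ 0 := by
    intro hc
    have := congrArg Complex.im hc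
    simp [hωim] at this
    linarith
  have hD : ∀ s : ℝ, (s : ℂ) + ω ≠ 0 := by
    intro s hc
    have := congrArg Complex.im hc
    simp [hωim] at this
    linarith
  -- the quadratic denominators
  let d : ℝ → ℝ := fun s => s ^ 2 + 2 * Real.cos δ * s + 1
  have hd : ∀ s, 0 ≤ s → 0 < d s := fun s hs => by
    have := mul_nonneg hcd hs
    simp only [d]; nlinarith [sq_nonneg s]
  have hDD : ∀ s : ℝ, ((s : ℂ) + ω) * (starRingEnd ℂ) ((s : ℂ) + ω) = (d s : ℂ) := by
    intro s
    rw [Complex.mul_conj, Complex.normSq_apply]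
    congr 1
    simp only [Complex.add_re, Complex.add_im, Complex.ofReal_re, Complex.ofReal_im, hωre, hωim, d]
    linear_combination hpy
  let zf : ℝ → ℂ := fun s => κ * ((s : ℂ) + (starRingEnd ℂ) ω) / ((s : ℂ) + ω)
  have hzf : ∀ s, zf s * ((s : ℂ) + ω) = κ * ((s : ℂ) + (starRingEnd ℂ) ω) := fun s =>
    div_mul_cancel₀ _ (hD s)
  have hcD : ∀ s : ℝ, (starRingEnd ℂ) ((s : ℂ) + ω) = (s : ℂ) + (starRingEnd ℂ) ω := by
    intro s; simp
  have hzn : ∀ s, ‖zf s‖ = 1 := by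
    intro s
    have h1 := congrArg norm (hzf s)
    rw [norm_mul, norm_mul, hκn, one_mul, ← hcD, Complex.norm_conj] at h1
    exact (mul_eq_right₀ (norm_ne_zero_iff.2 (hD s))).1 h1
  have hzd : ∀ s, zf s * (d s : ℂ) = κ * ((s : ℂ) + (starRingEnd ℂ) ω) ^ 2 := by
    intro s
    rw [← hDD, hcD, ← mul_assoc, hzf]; ring
  have hcω : (starRingEnd ℂ) ω = Complex.exp (((-δ : ℝ) : ℂ) * Complex.I) := by
    rw [hω, ← Complex.exp_conj]; simp
  have hzre : ∀ s, (zf s).re * d s = b * s ^ 2 + 2 * Real.cos (B + δ) * s + a := by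
    intro s
    have h1 := congrArg Complex.re (hzd s)
    rw [Complex.re_mul_ofReal] at h1
    rw [h1]
    have : κ * ((s : ℂ) + (starRingEnd ℂ) ω) ^ 2 = (s ^ 2 : ℝ) * Complex.exp (((-B : ℝ) : ℂ) * Complex.I)
        + (2 * s : ℝ) * Complex.exp (((-(B + δ) : ℝ) : ℂ) * Complex.I)
        + Complex.exp (((-(B + 2 * δ) : ℝ) : ℂ) * Complex.I) := by
      have e1 : Complex.exp (((-(B + δ) : ℝ) : ℂ) * Complex.I) = κ * (starRingEnd ℂ) ω := by
        rw [hκ, hcω, ← Complex.exp_add]; push_cast; ring_nf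
      have e2 : Complex.exp (((-(B + 2 * δ) : ℝ) : ℂ) * Complex.I)
          = κ * ((starRingEnd ℂ) ω * (starRingEnd ℂ) ω) := by
        rw [hκ, hcω, ← Complex.exp_add, ← Complex.exp_add]; push_cast; ring_nf
      rw [e1, e2, ← hκ]; push_cast; ring
    rw [this]
    simp only [Complex.add_re, Complex.re_ofReal_mul, Complex.exp_ofReal_mul_I_re, Real.cos_neg,
      ← hbc, ← hac]
    ring
  have hβ' : ∀ s, 0 ≤ s → 2 * (α * zf s).re - β = 2 * Real.sin δ ^ 2 * s / d s := by
    intro s hs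
    rw [eq_div_iff (hd s hs).ne']
    have h1 : α * zf s * (d s : ℂ) = (1 / 2 : ℝ) * ((s ^ 2 : ℝ) * Complex.exp ((δ : ℂ) * Complex.I)
        + (2 * s : ℝ) + Complex.exp (((-δ : ℝ) : ℂ) * Complex.I)) := by
      rw [mul_assoc, hzd, hα', ← hcω, ← hω]
      have e1 : Complex.exp (((B + δ : ℝ) : ℂ) * Complex.I) * κ = ω := by
        rw [hκ, hω, ← Complex.exp_add]; push_cast; ring_nf
      have e2 : ω * (starRingEnd ℂ) ω = 1 := by
        rw [hcω, hω, ← Complex.exp_add]; push_cast; ring_nf; simp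
      rw [mul_assoc (1 / 2 : ℂ), ← mul_assoc (Complex.exp _), e1]
      push_cast
      linear_combination (1 / 2) * (2 * s + (starRingEnd ℂ) ω) * e2
    have h2 := congrArg Complex.re h1
    rw [Complex.re_mul_ofReal, Complex.re_ofReal_mul] at h2
    simp only [Complex.add_re, Complex.re_ofReal_mul, Complex.exp_ofReal_mul_I_re, Real.cos_neg,
      Complex.ofReal_re] at h2
    rw [hβ]
    change (2 * (α * zf s).re - Real.cos δ) * d s = _
    simp only [d] at h2 ⊢
    linear_combination 2 * h2 - 2 * s * hpy
  -- the polynomial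
  set p : Polynomial ℝ := ∑ m : Fin (n + 1 + 1), Polynomial.C (r m) *
    Polynomial.Chebyshev.T ℝ ((m : ℕ) : ℤ) with hp
  have hpe : ∀ x, p.eval x = ∑ m : Fin (n + 1 + 1), r m *
      (Polynomial.Chebyshev.T ℝ ((m : ℕ) : ℤ)).eval x := by
    intro x; rw [hp, Polynomial.eval_finsetSum]; simp
  have hpd : p.natDegree ≤ n + 1 := by
    rw [hp]
    refine Polynomial.natDegree_sum_le_of_forall_le _ _ fun m _ => ?_
    refine (Polynomial.natDegree_C_mul_le _ _).trans ?_
    rw [Polynomial.Chebyshev.natDegree_T, Int.natAbs_natCast]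
    omega
  obtain ⟨G, hG, hGe⟩ := aux_homog (n + 1) 2 p
    (Polynomial.C b * Polynomial.X ^ 2 + Polynomial.C (2 * Real.cos (B + δ)) * Polynomial.X
      + Polynomial.C a)
    (Polynomial.C 1 * Polynomial.X ^ 2 + Polynomial.C (2 * Real.cos δ) * Polynomial.X
      + Polynomial.C 1) hpd Polynomial.natDegree_quadratic_le Polynomial.natDegree_quadratic_le
  have hGe' : ∀ s, 0 ≤ s → G.eval s = d s ^ (n + 1) * p.eval (zf s).re := by
    intro s hs
    have hds := hd s hs
    have e1 : Polynomial.eval s (Polynomial.C 1 * Polynomial.X ^ 2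
      + Polynomial.C (2 * Real.cos δ) * Polynomial.X + Polynomial.C 1) = d s := by
      simp [d]
    have e2 := hGe s (by rw [e1]; exact hds.ne')
    rw [e1] at e2
    rw [e2]
    congr 2
    rw [div_eq_iff hds.ne', hzre]
    simp
  have hmem : ∀ s, 0 ≤ s → (zf s).re ∈ Set.Icc a b := by
    intro s hs
    have hds := hd s hs
    have e := hzre s
    constructor
    · refine le_of_mul_le_mul_right ?_ hds
      rw [e, hφ2, ← hac]
      have := mul_nonneg (mul_nonneg hsA hsd.le) hs
      have := mul_nonneg (sub_nonneg.2 hab.le) (sq_nonneg s)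
      simp only [d]
      linarith
    · refine le_of_mul_le_mul_right ?_ hds
      rw [e, hφ1, ← hbc]
      have := mul_nonneg (mul_nonneg hsB hsd.le) hs
      simp only [d]
      linarith
  obtain ⟨A0, B0, A1, B1, hA0, hB0', hA1, hB1, hsos⟩ := aux_halfline n G (by omega) (fun s hs => by
    rw [hGe' s hs, hpe]
    exact mul_nonneg (pow_nonneg (hd s hs).le _) (h _ (hmem s hs)))
  obtain ⟨q0, hq0, eq0⟩ := aux_pull (n + 1) A0 hA0 κ ω hκ0 hωω
  obtain ⟨q1, hq1, eq1⟩ := aux_pull (n + 1) B0 hB0' κ ω hκ0 hωω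
  obtain ⟨r0, hr0, er0⟩ := aux_pull n A1 hA1 κ ω hκ0 hωω
  obtain ⟨r1, hr1, er1⟩ := aux_pull n B1 hB1 κ ω hκ0 hωω
  have hsq : ∀ (k : ℕ) (q : Polynomial ℂ) (A : Polynomial ℝ), (∀ (s : ℝ) (z : ℂ), (s : ℂ) + ω ≠ 0 →
      z * ((s : ℂ) + ω) = κ * ((s : ℂ) + (starRingEnd ℂ) ω) →
      q.eval z * ((s : ℂ) + ω) ^ k = ((A.eval s : ℝ) : ℂ)) → ∀ s : ℝ,
      q.eval (zf s) * (starRingEnd ℂ) (q.eval (zf s)) * (d s : ℂ) ^ k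
        = ((A.eval s : ℝ) : ℂ) ^ 2 := by
    intro k q A hq s
    have e := hq s (zf s) (hD s) (hzf s)
    have e' := congrArg (starRingEnd ℂ) e
    rw [Complex.conj_ofReal, map_mul, map_pow] at e'
    rw [← hDD, mul_pow, pow_two]
    nth_rewrite 1 [← e]
    rw [← e']
    ring
  let vec : (k : ℕ) → Polynomial ℂ → Matrix (Fin k) (Fin k) ℂ := fun k q =>
    Matrix.vecMulVec (fun i : Fin k => q.coeff i) (star (fun i : Fin k => q.coeff i))
  have hvec : ∀ k q, (vec k q).PosSemidef := fun k q => Matrix.posSemidef_vecMulVec_self_star _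
  set γ : ℝ := (2 * Real.sin δ ^ 2)⁻¹ with hγ
  have hγ0 : 0 ≤ γ := by positivity
  refine ⟨vec (n + 1 + 1) q0 + vec (n + 1 + 1) q1, (γ : ℂ) • (vec (n + 1) r0 + vec (n + 1) r1),
    (hvec _ _).add (hvec _ _), ((hvec _ _).add (hvec _ _)).smul (Complex.zero_le_real.2 hγ0), ?_⟩
  intro m
  have hmain := aux_coeff_eq (n + 1) (auxE (vec (n + 1 + 1) q0 + vec (n + 1 + 1) q1)
    ((γ : ℂ) • (vec (n + 1) r0 + vec (n + 1) r1)) α β) (auxRho r) (zf '' Set.Ici 0) ?_ ?_ ?_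
    ((m : ℕ) : ℤ) (by rw [Finset.mem_Icc]; omega)
  · refine hmain.trans ?_
    unfold auxRho
    rw [dif_pos (by rw [Int.natAbs_natCast]; exact m.2)]
    have hm0 : (((m : ℕ) : ℤ) = 0) ↔ m = 0 := by rw [Fin.ext_iff]; simp
    simp only [Int.natAbs_natCast, hm0]
  · refine (Set.Ici_infinite 0).image ?_
    intro s _ t _ hst
    have h1 := hzf s
    have h2 := hzf t
    rw [← hst] at h2
    have h3 : κ * ((starRingEnd ℂ) ω - ω) * ((s : ℂ) - t) = 0 := by
      linear_combination (t + ω) * h1 - (s + ω) * h2 + 0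
    have h4 := (mul_eq_zero.1 h3).resolve_left (mul_ne_zero hκ0 hωω)
    exact_mod_cast sub_eq_zero.1 h4
  · rintro _ ⟨s, _, rfl⟩ hc
    have := hzn s
    rw [hc] at this; simp at this
  · rintro _ ⟨s, hs, rfl⟩
    have hs' : 0 ≤ s := hs
    have hz0 : zf s ≠ 0 := by
      intro hc
      have := hzn s
      rw [hc] at this; simp at this
    rw [auxE_sum _ _ _ _ _ hz0, auxRho_sum r _ (hzn s), aux_two_re _ _ _ (hzn s), auxGen_smul,
      auxGen_add, auxGen_add, auxGen_vecMulVec q0 (by omega) _ (hzn s),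
      auxGen_vecMulVec q1 (by omega) _ (hzn s), auxGen_vecMulVec r0 (by omega) _ (hzn s),
      auxGen_vecMulVec r1 (by omega) _ (hzn s), ← hpe, hβ' s hs']
    have g0 := hsq _ _ _ eq0 s
    have g1 := hsq _ _ _ eq1 s
    have g2 := hsq _ _ _ er0 s
    have g3 := hsq _ _ _ er1 s
    have hdc : (d s : ℂ) ≠ 0 := by exact_mod_cast (hd s hs').ne'
    have key := hsos s hs'
    rw [hGe' s hs'] at key
    have keyC := congrArg (fun x : ℝ => (x : ℂ)) key
    push_cast at keyC
    have hγs : ((2 * Real.sin δ ^ 2 * s / d s : ℝ) : ℂ) * (γ : ℂ) * (d s : ℂ) = s := by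
      have : 2 * Real.sin δ ^ 2 * s / d s * γ * d s = s := by
        have := (hd s hs').ne'
        rw [hγ]; field_simp
      exact_mod_cast this
    refine mul_right_cancel₀ (pow_ne_zero (n + 1) hdc) ?_
    rw [mul_comm ((p.eval (zf s).re : ℝ) : ℂ), keyC, ← g0, ← g1, ← g2, ← g3]
    linear_combination (Polynomial.eval (zf s) r0 * (starRingEnd ℂ) (Polynomial.eval (zf s) r0)
      + Polynomial.eval (zf s) r1 * (starRingEnd ℂ) (Polynomial.eval (zf s) r1)) * (d s : ℂ) ^ n * hγs

/-- For `K = ⋃_{ℓ<L} [a ℓ, b ℓ] ⊆ [-1,1]` and a rational weight `w = Σ/Ω` with `Σ, Ω > 0`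
on each interval: (1) for a polynomial `P` of degree at most `N` and `c ∈ ℝ`, the bound
`|Ω P / Σ| ≤ c` on `K` is equivalent to the existence, for each interval and each sign,
of the semidefinite certificate for nonnegativity of `c·Σ ± Ω·P`; (2) consequently, the
minimal such `c` over monic `P` of degree `N` equals the minimal sup-norm of `P/w = ΩP/Σ`
on `K` over monic `P` of degree `N`. -/
theorem chebyshev_first_kind_sdp
    (L : ℕ) (hL : 0 < L) (a b : ℕ → ℝ)
    (ha0 : a 0 = -1) (hbL : b (L - 1) = 1)
    (hab : ∀ ℓ < L, a ℓ < b ℓ)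
    (hgap : ∀ ℓ, ℓ + 1 < L → b ℓ < a (ℓ + 1))
    (Sig Om : Polynomial ℝ)
    (hSig : ∀ ℓ < L, ∀ x ∈ Set.Icc (a ℓ) (b ℓ), 0 < Sig.eval x)
    (hOm : ∀ ℓ < L, ∀ x ∈ Set.Icc (a ℓ) (b ℓ), 0 < Om.eval x)
    (N : ℕ) (hN : 1 ≤ N) (M : ℕ) (hM : M = max Sig.natDegree (Om.natDegree + N))
    (σ : Fin (M + 1) → ℝ)
    (hσ : Sig = ∑ m : Fin (M + 1), Polynomial.C (σ m) * Polynomial.Chebyshev.T ℝ ((m : ℕ) : ℤ))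
    (α : ℕ → ℂ)
    (hα : ∀ ℓ, α ℓ = (1 / 2) * Complex.exp (Complex.I *
      (((Real.arccos (a ℓ) + Real.arccos (b ℓ)) / 2 : ℝ) : ℂ)))
    (β : ℕ → ℝ)
    (hβ : ∀ ℓ, β ℓ = Real.cos ((Real.arccos (a ℓ) - Real.arccos (b ℓ)) / 2)) :
    (∀ (P : Polynomial ℝ) (c : ℝ), P.natDegree ≤ N →
      ∀ τ : Fin (M + 1) → ℝ,
        Om * P = ∑ m : Fin (M + 1), Polynomial.C (τ m) * Polynomial.Chebyshev.T ℝ ((m : ℕ) : ℤ) →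
      ((∀ ℓ < L, ∀ x ∈ Set.Icc (a ℓ) (b ℓ), |Om.eval x * P.eval x / Sig.eval x| ≤ c) ↔
        (∀ ℓ < L, ∀ e : ℝ, e = 1 ∨ e = -1 →
          SdpCert M (α ℓ) (β ℓ) (fun m => σ m * c + e * τ m))))
    ∧
    sInf { c : ℝ | ∃ P : Polynomial ℝ, P.Monic ∧ P.natDegree = N ∧
        ∃ τ : Fin (M + 1) → ℝ,
          Om * P = ∑ m : Fin (M + 1), Polynomial.C (τ m) * Polynomial.Chebyshev.T ℝ ((m : ℕ) : ℤ) ∧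
          ∀ ℓ < L, ∀ e : ℝ, e = 1 ∨ e = -1 →
            SdpCert M (α ℓ) (β ℓ) (fun m => σ m * c + e * τ m) }
      = sInf { r : ℝ | ∃ P : Polynomial ℝ, P.Monic ∧ P.natDegree = N ∧
          r = sSup ((fun x => |Om.eval x * P.eval x / Sig.eval x|) ''
            (⋃ ℓ ∈ Finset.range L, Set.Icc (a ℓ) (b ℓ))) } := by
  have hchain : ∀ k, ∀ ℓ, ℓ + k < L → a ℓ ≤ a (ℓ + k) ∧ b ℓ ≤ b (ℓ + k) := by
    intro k
    induction k with
    | zero => intro ℓ _; exact ⟨le_refl _, le_refl _⟩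
    | succ k ih =>
      intro ℓ hk
      have h1 := ih ℓ (by omega)
      have h2 := hgap (ℓ + k) (by omega)
      have h3 := hab (ℓ + k) (by omega)
      have h4 := hab (ℓ + k + 1) (by omega)
      rw [← add_assoc]
      exact ⟨by linarith, by linarith⟩
  have ha1 : ∀ ℓ < L, -1 ≤ a ℓ := by
    intro ℓ hℓ
    have := (hchain ℓ 0 (by omega)).1
    rw [ha0, zero_add] at this; exact this
  have hb1 : ∀ ℓ < L, b ℓ ≤ 1 := by
    intro ℓ hℓ
    have := (hchain (L - 1 - ℓ) ℓ (by omega)).2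
    rw [show ℓ + (L - 1 - ℓ) = L - 1 by omega, hbL] at this; exact this
  have hM1 : 1 ≤ M := by omega
  have part1 : ∀ (P : Polynomial ℝ) (c : ℝ), P.natDegree ≤ N →
      ∀ τ : Fin (M + 1) → ℝ,
        Om * P = ∑ m : Fin (M + 1), Polynomial.C (τ m) * Polynomial.Chebyshev.T ℝ ((m : ℕ) : ℤ) →
      ((∀ ℓ < L, ∀ x ∈ Set.Icc (a ℓ) (b ℓ), |Om.eval x * P.eval x / Sig.eval x| ≤ c) ↔
        (∀ ℓ < L, ∀ e : ℝ, e = 1 ∨ e = -1 →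
          SdpCert M (α ℓ) (β ℓ) (fun m => σ m * c + e * τ m))) := by
    intro P c _ τ hτ
    have hev : ∀ e x : ℝ, ∑ m : Fin (M + 1), (σ m * c + e * τ m) *
        (Polynomial.Chebyshev.T ℝ ((m : ℕ) : ℤ)).eval x
        = c * Sig.eval x + e * (Om.eval x * P.eval x) := by
      intro e x
      rw [← Polynomial.eval_mul, hτ]
      conv_rhs => rw [hσ]
      simp only [Polynomial.eval_finsetSum, Polynomial.eval_mul, Polynomial.eval_C,
        Finset.mul_sum, ← Finset.sum_add_distrib]
      refine Finset.sum_congr rfl fun m _ => ?_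
      ring
    constructor
    · intro h ℓ hℓ e he
      obtain ⟨n, rfl⟩ : ∃ n, M = n + 1 := ⟨M - 1, by omega⟩
      refine aux_cert_backward n (a ℓ) (b ℓ) (ha1 ℓ hℓ) (hb1 ℓ hℓ) (hab ℓ hℓ) _ (hα ℓ) _ (hβ ℓ) _ ?_
      intro x hx
      rw [hev]
      have h1 := h ℓ hℓ x hx
      have h2 := hSig ℓ hℓ x hx
      rw [abs_div, abs_of_pos h2, div_le_iff₀ h2, abs_le] at h1
      rcases he with rfl | rfl <;> linarith
    · intro h ℓ hℓ x hx
      have h2 := hSig ℓ hℓ x hx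
      have hp := aux_cert_forward M (a ℓ) (b ℓ) (ha1 ℓ hℓ) (hb1 ℓ hℓ) (hab ℓ hℓ) _ (hα ℓ) _ (hβ ℓ) _
        (h ℓ hℓ 1 (Or.inl rfl)) x hx
      have hm := aux_cert_forward M (a ℓ) (b ℓ) (ha1 ℓ hℓ) (hb1 ℓ hℓ) (hab ℓ hℓ) _ (hα ℓ) _ (hβ ℓ) _
        (h ℓ hℓ (-1) (Or.inr rfl)) x hx
      rw [hev] at hp hm
      rw [abs_div, abs_of_pos h2, div_le_iff₀ h2, abs_le]
      constructor <;> linarith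
  refine ⟨part1, ?_⟩
  set K : Set ℝ := ⋃ ℓ ∈ Finset.range L, Set.Icc (a ℓ) (b ℓ) with hK
  have hKmem : ∀ x, x ∈ K ↔ ∃ ℓ < L, x ∈ Set.Icc (a ℓ) (b ℓ) := by
    intro x; simp only [hK, Set.mem_iUnion, Finset.mem_range, exists_prop]
  have hKc : IsCompact K := (Finset.range L).isCompact_biUnion fun ℓ _ => isCompact_Icc
  have hKn : (a 0) ∈ K := (hKmem _).2 ⟨0, hL, Set.left_mem_Icc.2 (hab 0 hL).le⟩
  have hbdd : ∀ P : Polynomial ℝ,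
      BddAbove ((fun x => |Om.eval x * P.eval x / Sig.eval x|) '' K) := by
    intro P
    refine (hKc.image_of_continuousOn ?_).bddAbove
    refine ContinuousOn.abs (ContinuousOn.div (Om.continuous.mul P.continuous).continuousOn
      Sig.continuous.continuousOn ?_)
    intro x hx
    obtain ⟨ℓ, hℓ, hxx⟩ := (hKmem x).1 hx
    exact (hSig ℓ hℓ x hxx).ne'
  have hsupnn : ∀ P : Polynomial ℝ,
      0 ≤ sSup ((fun x => |Om.eval x * P.eval x / Sig.eval x|) '' K) := fun P =>
    (abs_nonneg _).trans (le_csSup (hbdd P) ⟨_, hKn, rfl⟩)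
  have hτex : ∀ P : Polynomial ℝ, P.natDegree = N → ∃ τ : Fin (M + 1) → ℝ,
      Om * P = ∑ m : Fin (M + 1), Polynomial.C (τ m) * Polynomial.Chebyshev.T ℝ ((m : ℕ) : ℤ) := by
    intro P hP
    refine aux_cheb_expand M _ (Polynomial.natDegree_mul_le.trans ?_)
    omega
  have hsub : ∀ P : Polynomial ℝ, P.Monic → P.natDegree = N →
      sSup ((fun x => |Om.eval x * P.eval x / Sig.eval x|) '' K) ∈
      { c : ℝ | ∃ P : Polynomial ℝ, P.Monic ∧ P.natDegree = N ∧
        ∃ τ : Fin (M + 1) → ℝ,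
          Om * P = ∑ m : Fin (M + 1), Polynomial.C (τ m) * Polynomial.Chebyshev.T ℝ ((m : ℕ) : ℤ) ∧
          ∀ ℓ < L, ∀ e : ℝ, e = 1 ∨ e = -1 →
            SdpCert M (α ℓ) (β ℓ) (fun m => σ m * c + e * τ m) } := by
    intro P hP hd
    obtain ⟨τ, hτ⟩ := hτex P hd
    refine ⟨P, hP, hd, τ, hτ, (part1 P _ hd.le τ hτ).1 ?_⟩
    intro ℓ hℓ x hx
    exact le_csSup (hbdd P) ⟨x, (hKmem x).2 ⟨ℓ, hℓ, hx⟩, rfl⟩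
  have hdom : ∀ c ∈ { c : ℝ | ∃ P : Polynomial ℝ, P.Monic ∧ P.natDegree = N ∧
        ∃ τ : Fin (M + 1) → ℝ,
          Om * P = ∑ m : Fin (M + 1), Polynomial.C (τ m) * Polynomial.Chebyshev.T ℝ ((m : ℕ) : ℤ) ∧
          ∀ ℓ < L, ∀ e : ℝ, e = 1 ∨ e = -1 →
            SdpCert M (α ℓ) (β ℓ) (fun m => σ m * c + e * τ m) },
      ∃ P : Polynomial ℝ, P.Monic ∧ P.natDegree = N ∧
        sSup ((fun x => |Om.eval x * P.eval x / Sig.eval x|) '' K) ≤ c := by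
    rintro c ⟨P, hP, hd, τ, hτ, hcert⟩
    have hb := (part1 P c hd.le τ hτ).2 hcert
    refine ⟨P, hP, hd, csSup_le ⟨_, _, hKn, rfl⟩ ?_⟩
    rintro _ ⟨x, hx, rfl⟩
    obtain ⟨ℓ, hℓ, hxx⟩ := (hKmem x).1 hx
    exact hb ℓ hℓ x hxx
  apply le_antisymm
  · refine csInf_le_csInf ⟨0, ?_⟩ ?_ ?_
    · intro c hc
      obtain ⟨P, _, _, h⟩ := hdom c hc
      exact (hsupnn P).trans h
    · exact ⟨_, Polynomial.X ^ N, Polynomial.monic_X_pow N, Polynomial.natDegree_X_pow N, rfl⟩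
    · rintro _ ⟨P, hP, hd, rfl⟩
      exact hsub P hP hd
  · refine le_csInf ⟨_, hsub (Polynomial.X ^ N) (Polynomial.monic_X_pow N)
      (Polynomial.natDegree_X_pow N)⟩ ?_
    intro c hc
    obtain ⟨P, hP, hd, h⟩ := hdom c hc
    refine le_trans (csInf_le ⟨0, ?_⟩ ?_) h
    · rintro _ ⟨P', _, _, rfl⟩
      exact hsupnn P'
    · exact ⟨P, hP, hd, rfl⟩
end

section
/- Let y = (y_k)_{k≥0} be a sequence of real numbers. There exists a finite nonnegative Borel measure μ on [0, π] such that ∫_0^π cos(kθ) dμ(θ) = y_k for all k ≥ 0 if and only if for every d ≥ 0 the (d+1)×(d+1) symmetric Toeplitz matrix Toep_d(y) with entries (Toep_d(y))_{i,j} = y_{|i−j|} is positive semidefinite. -/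
open MeasureTheory

/-- The `(d+1) × (d+1)` symmetric Toeplitz matrix built from a sequence `y`,
with entries `y_{|i−j|}`. -/
noncomputable def toepN (d : ℕ) (y : ℕ → ℝ) : Matrix (Fin (d + 1)) (Fin (d + 1)) ℝ :=
  fun i j => y (((i : ℕ) : ℤ) - ((j : ℕ) : ℤ)).natAbs

lemma toep_quad (d : ℕ) (y : ℕ → ℝ) (x : Fin (d + 1) → ℝ) :
    star x ⬝ᵥ ((toepN d y).mulVec x) =
      ∑ i : Fin (d + 1), ∑ j : Fin (d + 1), y (((i : ℕ) : ℤ) - ((j : ℕ) : ℤ)).natAbs * (x i * x j) := by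
  simp only [dotProduct, Matrix.mulVec, toepN, Finset.mul_sum, star_trivial]
  refine Finset.sum_congr rfl fun i _ => Finset.sum_congr rfl fun j _ => ?_
  ring

lemma cos_natAbs (a b : ℕ) (t : ℝ) :
    Real.cos (((((a : ℤ) - (b : ℤ)).natAbs : ℕ) : ℝ) * t) =
      Real.cos (a * t) * Real.cos (b * t) + Real.sin (a * t) * Real.sin (b * t) := by
  rw [← Real.cos_sub, ← sub_mul]
  have h : ((((a : ℤ) - (b : ℤ)).natAbs : ℕ) : ℝ) = |(a : ℝ) - b| := by
    rw [Nat.cast_natAbs]; push_cast; rfl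
  rw [h]
  rcases abs_cases ((a : ℝ) - b) with h | h
  · rw [h.1]
  · rw [h.1, neg_mul, Real.cos_neg]

lemma toep_herm (d : ℕ) (y : ℕ → ℝ) : (toepN d y).IsHermitian := by
  ext i j
  simp only [Matrix.conjTranspose_apply, toepN, star_trivial]
  rw [← Int.natAbs_neg, neg_sub]

lemma cos_quad {d : ℕ} (x : Fin (d + 1) → ℝ) (t : ℝ) :
    ∑ i : Fin (d + 1), ∑ j : Fin (d + 1), Real.cos ((((((i : ℕ) : ℤ) - ((j : ℕ) : ℤ)).natAbs : ℕ) : ℝ) * t) * (x i * x j) =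
      (∑ i : Fin (d + 1), x i * Real.cos ((i : ℕ) * t)) ^ 2 + (∑ i : Fin (d + 1), x i * Real.sin ((i : ℕ) * t)) ^ 2 := by
  rw [sq, sq, Finset.sum_mul_sum, Finset.sum_mul_sum, ← Finset.sum_add_distrib]
  refine Finset.sum_congr rfl fun i _ => ?_
  rw [← Finset.sum_add_distrib]
  refine Finset.sum_congr rfl fun j _ => ?_
  rw [cos_natAbs]; ring

lemma cos_integrable (μ : Measure ℝ) [IsFiniteMeasure μ] (a : ℝ) :
    Integrable (fun t => Real.cos (a * t)) μ := by
  refine Integrable.of_bound (C := 1) (by fun_prop) ?_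
  filter_upwards with t
  simpa using Real.abs_cos_le_one _

lemma forward (y : ℕ → ℝ) (μ : Measure ℝ) [IsFiniteMeasure μ]
    (h : ∀ k : ℕ, ∫ θ, Real.cos (k * θ) ∂μ = y k) (d : ℕ) : (toepN d y).PosSemidef := by
  refine .of_dotProduct_mulVec_nonneg (toep_herm d y) fun x => ?_
  rw [toep_quad]
  have : ∑ i : Fin (d + 1), ∑ j : Fin (d + 1), y (((i : ℕ) : ℤ) - ((j : ℕ) : ℤ)).natAbs * (x i * x j) =
      ∫ t, ∑ i : Fin (d + 1), ∑ j : Fin (d + 1),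
        Real.cos ((((((i : ℕ) : ℤ) - ((j : ℕ) : ℤ)).natAbs : ℕ) : ℝ) * t) * (x i * x j) ∂μ := by
    rw [integral_finsetSum]
    · refine Finset.sum_congr rfl fun i _ => ?_
      rw [integral_finsetSum]
      · refine Finset.sum_congr rfl fun j _ => ?_
        rw [integral_mul_const, h]
      · exact fun j _ => (cos_integrable μ _).mul_const _
    · exact fun i _ => integrable_finsetSum _ fun j _ => (cos_integrable μ _).mul_const _
  rw [this]
  refine integral_nonneg fun t => ?_
  simp only [cos_quad]
  positivity

/-- Fejér mean -/
noncomputable def fej (y : ℕ → ℝ) (n : ℕ) (t : ℝ) : ℝ :=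
  ∑ i : Fin (n + 1), ∑ j : Fin (n + 1), y (((i : ℕ) : ℤ) - ((j : ℕ) : ℤ)).natAbs *
    Real.cos ((((((i : ℕ) : ℤ) - ((j : ℕ) : ℤ)).natAbs : ℕ) : ℝ) * t)

lemma fej_nonneg (y : ℕ → ℝ) (h : ∀ d : ℕ, (toepN d y).PosSemidef) (n : ℕ) (t : ℝ) :
    0 ≤ fej y n t := by
  have h1 := (h n).dotProduct_mulVec_nonneg (fun i => Real.cos ((i : ℕ) * t))
  have h2 := (h n).dotProduct_mulVec_nonneg (fun i => Real.sin ((i : ℕ) * t))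
  rw [toep_quad] at h1 h2
  unfold fej
  simp only [cos_natAbs, mul_add, Finset.sum_add_distrib]
  exact add_nonneg h1 h2

lemma int_cos_int (m : ℤ) : ∫ t in (0 : ℝ)..Real.pi, Real.cos (m * t) =
    if m = 0 then Real.pi else 0 := by
  split_ifs with h
  · simp [h]
  · have hm : (m : ℝ) ≠ 0 := by exact_mod_cast h
    rw [intervalIntegral.integral_comp_mul_left (fun x => Real.cos x) hm, integral_cos]
    simp [Real.sin_int_mul_pi]

lemma int_cos_cos (m k : ℕ) : ∫ t in (0 : ℝ)..Real.pi, Real.cos (m * t) * Real.cos (k * t) =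
    Real.pi / 2 * ((if m = k then 1 else 0) + (if m = k ∧ k = 0 then 1 else 0)) := by
  have : ∀ t : ℝ, Real.cos (m * t) * Real.cos (k * t) =
      (Real.cos (((m - k : ℤ) : ℝ) * t) + Real.cos (((m + k : ℤ) : ℝ) * t)) / 2 := by
    intro t
    push_cast
    rw [sub_mul, add_mul, Real.cos_sub, Real.cos_add]; ring
  simp only [this]
  rw [intervalIntegral.integral_div, intervalIntegral.integral_add, int_cos_int, int_cos_int]
  · have e1 : ((m : ℤ) - k = 0) ↔ m = k := by omega
    have e2 : ((m : ℤ) + k = 0) ↔ m = k ∧ k = 0 := by omega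
    simp only [e1, e2]
    split_ifs <;> ring
  · exact (by fun_prop : Continuous _).intervalIntegrable _ _
  · exact (by fun_prop : Continuous _).intervalIntegrable _ _

lemma count_aux (n k : ℕ) (hk : k ≤ n) :
    ∑ i : Fin (n + 1), ∑ j : Fin (n + 1), (if (i : ℕ) = j + k then (1 : ℝ) else 0) =
      n + 1 - k := by
  rw [Finset.sum_comm]
  have : ∀ j : Fin (n + 1), ∑ i : Fin (n + 1), (if (i : ℕ) = j + k then (1 : ℝ) else 0) =
      if (j : ℕ) < n + 1 - k then 1 else 0 := by
    intro j
    rw [Fin.sum_univ_eq_sum_range (fun i => if i = (j : ℕ) + k then (1 : ℝ) else 0),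
      Finset.sum_ite_eq']
    simp only [Finset.mem_range]
    congr 1
    apply propext; omega
  simp only [this]
  rw [Fin.sum_univ_eq_sum_range (fun j => if j < n + 1 - k then (1 : ℝ) else 0), Finset.sum_boole]
  have : (Finset.range (n + 1)).filter (fun j => j < n + 1 - k) = Finset.range (n + 1 - k) := by
    ext j; simp only [Finset.mem_filter, Finset.mem_range]; omega
  rw [this, Finset.card_range, Nat.cast_sub (by omega)]
  push_cast; ring

lemma count_sum (y : ℕ → ℝ) (n k : ℕ) (hk : k ≤ n) :
    ∑ i : Fin (n + 1), ∑ j : Fin (n + 1), y (((i : ℕ) : ℤ) - ((j : ℕ) : ℤ)).natAbs *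
      ((if (((i : ℕ) : ℤ) - ((j : ℕ) : ℤ)).natAbs = k then 1 else 0) +
        (if (((i : ℕ) : ℤ) - ((j : ℕ) : ℤ)).natAbs = k ∧ k = 0 then 1 else 0)) =
      2 * (n + 1 - k) * y k := by
  have e : ∀ i j : Fin (n + 1), y (((i : ℕ) : ℤ) - ((j : ℕ) : ℤ)).natAbs *
      ((if (((i : ℕ) : ℤ) - ((j : ℕ) : ℤ)).natAbs = k then (1 : ℝ) else 0) +
        (if (((i : ℕ) : ℤ) - ((j : ℕ) : ℤ)).natAbs = k ∧ k = 0 then 1 else 0)) =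
      ((if (i : ℕ) = j + k then 1 else 0) + (if (j : ℕ) = i + k then 1 else 0)) * y k := by
    intro i j
    by_cases h : (((i : ℕ) : ℤ) - ((j : ℕ) : ℤ)).natAbs = k
    · rw [h, mul_comm]
      congr 1
      have : ((i : ℕ) = j + k) ∨ ((j : ℕ) = i + k) := by omega
      split_ifs <;> first | omega | norm_num
    · have h1 : ¬ ((i : ℕ) = j + k) := by omega
      have h2 : ¬ ((j : ℕ) = i + k) := by omega
      simp [h, h1, h2]
  simp only [e, ← Finset.sum_mul, Finset.sum_add_distrib]
  rw [count_aux n k hk, Finset.sum_comm, count_aux n k hk]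
  ring

lemma fej_cont (y : ℕ → ℝ) (n : ℕ) : Continuous (fej y n) := by
  unfold fej; fun_prop

lemma fej_moment (y : ℕ → ℝ) (n k : ℕ) (hk : k ≤ n) :
    ∫ t in (0 : ℝ)..Real.pi, fej y n t * Real.cos (k * t) = Real.pi * (n + 1 - k) * y k := by
  unfold fej
  simp only [Finset.sum_mul]
  rw [intervalIntegral.integral_finsetSum]
  · have : ∀ i : Fin (n + 1), ∫ t in (0 : ℝ)..Real.pi, ∑ j : Fin (n + 1),
        y (((i : ℕ) : ℤ) - ((j : ℕ) : ℤ)).natAbs *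
        Real.cos ((((((i : ℕ) : ℤ) - ((j : ℕ) : ℤ)).natAbs : ℕ) : ℝ) * t) * Real.cos (k * t) =
        Real.pi / 2 * ∑ j : Fin (n + 1), y (((i : ℕ) : ℤ) - ((j : ℕ) : ℤ)).natAbs *
      ((if (((i : ℕ) : ℤ) - ((j : ℕ) : ℤ)).natAbs = k then 1 else 0) +
        (if (((i : ℕ) : ℤ) - ((j : ℕ) : ℤ)).natAbs = k ∧ k = 0 then 1 else 0)) := by
      intro i
      rw [intervalIntegral.integral_finsetSum, Finset.mul_sum]
      · refine Finset.sum_congr rfl fun j _ => ?_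
        simp only [mul_assoc]
        rw [intervalIntegral.integral_const_mul, int_cos_cos]
        ring
      · intro j _
        exact (by fun_prop : Continuous _).intervalIntegrable _ _
    simp only [this]
    rw [← Finset.mul_sum, count_sum y n k hk]
    ring
  · intro i _
    exact (by fun_prop : Continuous _).intervalIntegrable _ _

/-- Fejér approximating measure -/
noncomputable def fejM (y : ℕ → ℝ) (n : ℕ) : Measure ℝ :=
  (volume.restrict (Set.Icc 0 Real.pi)).withDensity
    (fun t => ENNReal.ofReal (fej y n t / (Real.pi * (n + 1))))

instance (y : ℕ → ℝ) (n : ℕ) : IsFiniteMeasure (fejM y n) := by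
  unfold fejM
  apply isFiniteMeasure_withDensity_ofReal
  have : Continuous fun t => fej y n t / (Real.pi * (n + 1)) := (fej_cont y n).div_const _
  exact (this.continuousOn.integrableOn_compact isCompact_Icc).2

lemma fejM_moment (y : ℕ → ℝ) (h : ∀ d : ℕ, (toepN d y).PosSemidef) (n k : ℕ) (hk : k ≤ n) :
    ∫ t, Real.cos (k * t) ∂(fejM y n) = (1 - k / (n + 1)) * y k := by
  unfold fejM
  have hc : Continuous fun t => fej y n t / (Real.pi * (n + 1)) := (fej_cont y n).div_const _
  rw [integral_withDensity_eq_integral_toReal_smul (hc.measurable.ennreal_ofReal) (by simp)]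
  have : ∀ t, (ENNReal.ofReal (fej y n t / (Real.pi * (n + 1)))).toReal • Real.cos (k * t) =
      (fej y n t * Real.cos (k * t)) / (Real.pi * (n + 1)) := by
    intro t
    rw [ENNReal.toReal_ofReal (div_nonneg (fej_nonneg y h n t) (by positivity)), smul_eq_mul]
    ring
  simp only [this]
  rw [integral_Icc_eq_integral_Ioc, ← intervalIntegral.integral_of_le Real.pi_pos.le,
    intervalIntegral.integral_div, fej_moment y n k hk]
  have := Real.pi_ne_zero
  have : (n : ℝ) + 1 ≠ 0 := by positivity
  field_simp

lemma fejM_compl (y : ℕ → ℝ) (n : ℕ) : fejM y n (Set.Icc 0 Real.pi)ᶜ = 0 := by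
  refine withDensity_absolutelyContinuous _ _ ?_
  rw [Measure.restrict_apply measurableSet_Icc.compl]
  simp

open Filter Topology in
lemma backward (y : ℕ → ℝ) (h : ∀ d : ℕ, (toepN d y).PosSemidef) :
    ∃ μ : Measure ℝ, IsFiniteMeasure μ ∧ μ (Set.Icc 0 Real.pi)ᶜ = 0 ∧
      ∀ k : ℕ, ∫ θ, Real.cos (k * θ) ∂μ = y k := by
  let ν : ℕ → FiniteMeasure ℝ := fun n => ⟨fejM y n, inferInstance⟩
  have hK := isCompact_setOfPred_finiteMeasure_le_of_isCompact (E := ℝ) (y 0).toNNReal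
    (K := Set.Icc 0 Real.pi) isCompact_Icc
  have hν : ∀ n, ν n ∈ {μ : FiniteMeasure ℝ | μ.mass ≤ (y 0).toNNReal ∧
      μ (Set.Icc 0 Real.pi)ᶜ = 0} := by
    intro n
    refine ⟨?_, ?_⟩
    · have h0 := fejM_moment y h n 0 (by omega)
      simp at h0
      have e : ((ν n).mass : ℝ) = y 0 := h0
      rw [← e]; simp
    · rw [FiniteMeasure.null_iff_toMeasure_null]
      exact fejM_compl y n
  obtain ⟨μ, hμ, hlim⟩ := hK.ultrafilter_le_nhds (Ultrafilter.map ν (hyperfilter ℕ))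
    (by
      rw [le_principal_iff]
      exact Filter.mem_map.2 (Filter.mem_of_superset univ_mem fun n _ => hν n))
  refine ⟨μ, inferInstance, (FiniteMeasure.null_iff_toMeasure_null _ _).1 hμ.2, fun k => ?_⟩
  have ht : Tendsto ν (hyperfilter ℕ : Filter ℕ) (𝓝 μ) := hlim
  rw [FiniteMeasure.tendsto_iff_forall_integral_tendsto] at ht
  let f : BoundedContinuousFunction ℝ ℝ :=
    BoundedContinuousFunction.ofNormedAddCommGroup (fun t => Real.cos (k * t)) (by fun_prop) 1
      (fun t => by simpa using Real.abs_cos_le_one _)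
  have h1 : Tendsto (fun n => ∫ t, Real.cos (k * t) ∂(fejM y n)) (hyperfilter ℕ : Filter ℕ)
    (𝓝 (∫ t, Real.cos (k * t) ∂(μ : Measure ℝ))) := ht f
  have h2 : Tendsto (fun n => ∫ t, Real.cos (k * t) ∂(fejM y n)) atTop (𝓝 (y k)) := by
    have : Tendsto (fun n : ℕ => (1 - (k : ℝ) / (n + 1)) * y k) atTop (𝓝 ((1 - 0) * y k)) := by
      refine Tendsto.mul_const _ (tendsto_const_nhds.sub ?_)
      exact tendsto_const_nhds.div_atTop
        (tendsto_atTop_add_const_right _ _ tendsto_natCast_atTop_atTop)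
    rw [sub_zero, one_mul] at this
    refine this.congr' ?_
    filter_upwards [eventually_ge_atTop k] with n hn
    rw [fejM_moment y h n k hn]
  exact tendsto_nhds_unique h1 (h2.mono_left Nat.hyperfilter_le_atTop)

/-- Trigonometric moment problem on `[0, π]`: a real sequence `y` is the sequence of
cosine moments `∫_0^π cos(kθ) dμ(θ)` of a finite nonnegative Borel measure `μ` on `[0, π]`
iff all its finite Toeplitz sections `Toep_d(y)` are positive semidefinite. -/
theorem cosine_moment_problem (y : ℕ → ℝ) :
    (∃ μ : Measure ℝ, IsFiniteMeasure μ ∧ μ (Set.Icc 0 Real.pi)ᶜ = 0 ∧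
      ∀ k : ℕ, ∫ θ, Real.cos (k * θ) ∂μ = y k) ↔
    ∀ d : ℕ, (toepN d y).PosSemidef := by
  constructor
  · rintro ⟨μ, hfin, -, h⟩ d
    exact forward y μ h d
  · exact backward y
end
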